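/- arXiv:1802.02549 — 3 statements merged into one kernel-verified Lean document; each statement's English description precedes it below -/
import Mathlib

section
/- Let A be any dg algebra over a commutative ring k. Two Maurer-Cartan elements of A are strongly homotopic (i.e. I-homotopic, where I is the singular simplicial set of [0,1]) if and only if they are homotopy gauge equivalent. -/
open DirectSum

/-- A (cohomologically graded) differential graded algebra over a commutative ring `k`:
a `ℤ`-graded `k`-algebra equipped with a square-zero degree `+1` differential
satisfying the graded Leibniz rule. -/
structure DGA (k : Type) [CommRing k] : Type 1 where
  A : Type
  [ringA : Ring A]
  [algA : Algebra k A]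
  gr : ℤ → Submodule k A
  [gradedA : GradedRing gr]
  d : A →ₗ[k] A
  d_sq : ∀ a, d (d a) = 0
  d_mem : ∀ (i : ℤ), ∀ a ∈ gr i, d a ∈ gr (i + 1)
  leibniz : ∀ (i : ℤ), ∀ a ∈ gr i, ∀ b, d (a * b) = d a * b + (((-1 : ℤˣ) ^ i : ℤˣ) : ℤ) • (a * d b)

attribute [instance] DGA.ringA DGA.algA DGA.gradedA

namespace DGA

variable {k : Type} [CommRing k]

/-- A Maurer-Cartan element of a dg algebra: a degree `1` element `x` with `d x + x² = 0`. -/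
def IsMC (A : DGA k) (x : A.A) : Prop := x ∈ A.gr 1 ∧ A.d x + x * x = 0

/-- The set of Maurer-Cartan elements of `A`. -/
def MCEl (A : DGA k) : Type := {x : A.A // A.IsMC x}

/-- The gauge action of an invertible element `g` on `x`:  `g·x = g x g⁻¹ - (d g) g⁻¹`. -/
def GaugeAct (A : DGA k) (g : (A.A)ˣ) (x : A.A) : A.A :=
  (g : A.A) * x * ((g⁻¹ : (A.A)ˣ) : A.A) - A.d (g : A.A) * ((g⁻¹ : (A.A)ˣ) : A.A)

/-- Gauge equivalence of elements of a dg algebra: `y = g·x` for some invertible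
degree-zero `g`. -/
def GaugeEquiv (A : DGA k) (x y : A.A) : Prop :=
  ∃ g : (A.A)ˣ, (g : A.A) ∈ A.gr 0 ∧ y = A.GaugeAct g x

/-- The Maurer-Cartan moduli set: Maurer-Cartan elements modulo gauge equivalence. -/
def MCmod (A : DGA k) : Type := Quot (fun x y : A.MCEl => A.GaugeEquiv x.1 y.1)

/-- `a` is cohomologous to `1` in the twisted algebra `A^x` (with differential `d + [x,-]`);
here `a` has degree `0` so the twisted differential of the degree `-1` element `s`
is `d s + x s + s x`. -/
def CohomologousToOne (A : DGA k) (x a : A.A) : Prop :=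
  ∃ s ∈ A.gr (-1 : ℤ), a - 1 = A.d s + (x * s + s * x)

/-- Homotopy gauge equivalence of Maurer-Cartan elements: the one-sided twisted modules
`A^{[x]}` and `A^{[y]}` are homotopy equivalent as right dg `A`-modules, explicitly:
there are degree-zero `g`, `h` intertwining the twisted differentials whose composites
are cohomologous to `1` in `A^x`, resp. `A^y`. -/
def HomotopyGaugeEquiv (A : DGA k) (x y : A.A) : Prop :=
  ∃ g ∈ A.gr 0, ∃ h ∈ A.gr 0,
    A.d g + y * g - g * x = 0 ∧
    A.d h + x * h - h * y = 0 ∧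
    A.CohomologousToOne x (h * g) ∧
    A.CohomologousToOne y (g * h)

/-- The Maurer-Cartan homotopy moduli set: MC elements modulo homotopy gauge
equivalence. -/
def MChmod (A : DGA k) : Type := Quot (fun x y : A.MCEl => A.HomotopyGaugeEquiv x.1 y.1)

open scoped Classical in
/-- The parity (Koszul sign) operator of a graded algebra: `a ↦ Σᵢ (-1)ⁱ aᵢ`. -/
noncomputable def parity (A : DGA k) (a : A.A) : A.A :=
  (DirectSum.decompose A.gr a).sum (fun i x => (((-1 : ℤˣ) ^ i : ℤˣ) : ℤ) • (x : A.A))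

end DGA

/-- A morphism of dg algebras: an algebra map preserving the grading and the differential. -/
structure DGAHom {k : Type} [CommRing k] (A B : DGA k) where
  toFun : A.A →ₐ[k] B.A
  map_gr : ∀ (i : ℤ), ∀ a ∈ A.gr i, toFun a ∈ B.gr i
  map_d : ∀ a, toFun (A.d a) = B.d (toFun a)

namespace DGAHom
variable {k : Type} [CommRing k]

def comp {A B C : DGA k} (g : DGAHom B C) (f : DGAHom A B) : DGAHom A C where
  toFun := g.toFun.comp f.toFun
  map_gr := fun i a ha => g.map_gr i _ (f.map_gr i a ha)
  map_d := fun a => by simp [f.map_d, g.map_d]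

def id' (A : DGA k) : DGAHom A A :=
  ⟨AlgHom.id k A.A, fun _ _ h => h, fun _ => rfl⟩

end DGAHom


/-! ## Topological simplices and singular simplices -/

/-- The standard topological `n`-simplex. -/
def TopSimplex (n : ℕ) : Type :=
  {f : Fin (n + 1) → ℝ // (∀ i, 0 ≤ f i) ∧ ∑ i, f i = 1}

instance (n : ℕ) : TopologicalSpace (TopSimplex n) :=
  inferInstanceAs (TopologicalSpace {f : Fin (n + 1) → ℝ // (∀ i, 0 ≤ f i) ∧ ∑ i, f i = 1})

/-- The affine map of topological simplices induced by a map of vertices. -/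
def vertAffine {m n : ℕ} (v : Fin (m + 1) → Fin (n + 1)) :
    C(TopSimplex m, TopSimplex n) where
  toFun f := ⟨fun j => ∑ i ∈ Finset.univ.filter (fun i => v i = j), f.1 i,
    ⟨fun j => Finset.sum_nonneg fun i _ => f.2.1 i, by
      rw [Finset.sum_fiberwise_of_maps_to (fun i _ => Finset.mem_univ (v i)) f.1]
      exact f.2.2⟩⟩
  continuous_toFun := by
    apply Continuous.subtype_mk
    exact continuous_pi fun j => continuous_finset_sum _ fun i _ =>
      (continuous_apply i).comp continuous_subtype_val

/-- The `i`-th face inclusion of topological simplices. -/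
def faceMap {n : ℕ} (i : Fin (n + 2)) : C(TopSimplex n, TopSimplex (n + 1)) :=
  vertAffine fun j => i.succAbove j

/-- The `i`-th degeneracy (collapse) map of topological simplices. -/
def degenMap {n : ℕ} (i : Fin (n + 1)) : C(TopSimplex (n + 1), TopSimplex n) :=
  vertAffine fun j => i.predAbove j

/-- The inclusion of the front `p`-face of the `n`-simplex. -/
def frontMap (p n : ℕ) (h : p ≤ n) : C(TopSimplex p, TopSimplex n) :=
  vertAffine fun j => Fin.castLE (by omega) j

/-- The inclusion of the back `q`-face of the `n`-simplex. -/
def backMap (q n : ℕ) (h : q ≤ n) : C(TopSimplex q, TopSimplex n) :=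
  vertAffine fun j : Fin (q + 1) => (⟨n - q + (j : ℕ), by have := j.isLt; omega⟩ : Fin (n + 1))

/-- The `j`-th vertex of the topological `n`-simplex. -/
def vertexPt (n : ℕ) (j : Fin (n + 1)) : TopSimplex n :=
  ⟨fun i => if i = j then 1 else 0,
    ⟨fun i => by dsimp only; split <;> norm_num, by simp⟩⟩

/-- The set of singular `n`-simplices of a topological space. -/
abbrev SingN (X : Type) [TopologicalSpace X] (n : ℕ) : Type := C(TopSimplex n, X)

/-- A singular `(n+1)`-simplex is degenerate if it factors through a degeneracy map. -/
def IsDegenSimplex {X : Type} [TopologicalSpace X] {n : ℕ} (σ : SingN X (n + 1)) : Prop :=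
  ∃ (i : Fin (n + 1)) (τ : SingN X n), σ = (τ : C(TopSimplex n, X)).comp (degenMap i)

/-- The constant singular `0`-simplex of `[0,1]` at `0`. -/
def const0 : SingN unitInterval 0 := ContinuousMap.const _ 0

/-- The constant singular `0`-simplex of `[0,1]` at `1`. -/
def const1 : SingN unitInterval 0 := ContinuousMap.const _ 1

/-! ## Strong homotopy of Maurer-Cartan elements via the singular simplicial set of `[0,1]` -/

/-- A Maurer-Cartan element of `A ⊗ I*`, where `I*` is the normalized singular cochain
algebra of `[0,1]` (pseudo-compact, with completed tensor product):  identified with a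
normalized `A`-valued singular cochain `X` on `[0,1]` of total degree `1`, i.e.
`X` assigns to every singular `n`-simplex of `[0,1]` an element of `A^{1-n}`, vanishes
on degenerate simplices, and satisfies the Maurer-Cartan equation
`dX + δX + X ⌣ X = 0` (with Koszul signs, the cup product being the Alexander-Whitney
front-face/back-face convolution). -/
def IsSingMCCochain {k : Type} [CommRing k] (A : DGA k)
    (X : ∀ n, SingN unitInterval n → A.A) : Prop :=
  (∀ (n : ℕ) σ, X n σ ∈ A.gr (1 - (n : ℤ))) ∧
  (∀ (n : ℕ) (i : Fin (n + 1)) (τ : SingN unitInterval n),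
    X (n + 1) (ContinuousMap.comp τ (degenMap i)) = 0) ∧
  (∀ σ : SingN unitInterval 0, A.d (X 0 σ) + X 0 σ * X 0 σ = 0) ∧
  (∀ (n : ℕ) (σ : SingN unitInterval (n + 1)),
    A.d (X (n + 1) σ)
      + (((-1 : ℤˣ) ^ ((n : ℤ) + 1) : ℤˣ) : ℤ) •
          ∑ i : Fin (n + 2), (((-1 : ℤˣ) ^ (i : ℕ) : ℤˣ) : ℤ) •
            X n (ContinuousMap.comp σ (faceMap i))
      + ∑ p : Fin (n + 2),
          (((-1 : ℤˣ) ^ (((p : ℕ) : ℤ) * (1 - ((n : ℤ) + 1 - ((p : ℕ) : ℤ)))) : ℤˣ) : ℤ) •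
            (X (p : ℕ)
                (ContinuousMap.comp σ (frontMap (p : ℕ) (n + 1) (Nat.le_of_lt_succ p.isLt))) *
              X (n + 1 - (p : ℕ))
                (ContinuousMap.comp σ (backMap (n + 1 - (p : ℕ)) (n + 1) (by omega)))) = 0)

/-- Two elements of a dg algebra `A` are strongly homotopic (`I`-homotopic, `I` being the
singular simplicial set of `[0,1]`) if there is a Maurer-Cartan element of `A ⊗ I*`
restricting to them at the two endpoints of `[0,1]`. -/
def MCStronglyHomotopic {k : Type} [CommRing k] (A : DGA k) (x₀ x₁ : A.A) : Prop :=
  ∃ X : ∀ n, SingN unitInterval n → A.A,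
    IsSingMCCochain A X ∧ X 0 const0 = x₀ ∧ X 0 const1 = x₁

section FwdHelpers

/-- barycentric coordinates -/
def bco {n : ℕ} (t : TopSimplex n) : Fin (n + 1) → ℝ := Subtype.val t

lemma bco_nonneg {n : ℕ} (t : TopSimplex n) (j) : 0 ≤ bco t j := (Subtype.property t).1 j

lemma bco_sum {n : ℕ} (t : TopSimplex n) : ∑ j, bco t j = 1 := (Subtype.property t).2

lemma bco_cont {n : ℕ} (j : Fin (n + 1)) : Continuous (fun t : TopSimplex n => bco t j) :=
  (continuous_apply j).comp continuous_subtype_val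

lemma bco_vert {m n : ℕ} (w : Fin (m + 1) → Fin (n + 1)) (t : TopSimplex m) (j) :
    bco (vertAffine w t) j = ∑ i ∈ Finset.univ.filter (fun i => w i = j), bco t i := rfl

/-- affine simplex in the unit interval with prescribed vertices -/
noncomputable def affS {n : ℕ} (v : Fin (n + 1) → Fin 2) : SingN unitInterval n where
  toFun t := ⟨∑ j, bco t j * (((v j : ℕ) : ℝ)), by
    constructor
    · exact Finset.sum_nonneg fun j _ => mul_nonneg (bco_nonneg t j) (Nat.cast_nonneg _)
    · rw [← bco_sum t]
      refine Finset.sum_le_sum fun j _ => ?_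
      have h1 : (((v j : ℕ) : ℝ)) ≤ 1 := by
        have : (v j : ℕ) ≤ 1 := by omega
        exact_mod_cast this
      nlinarith [bco_nonneg t j]⟩
  continuous_toFun := by
    apply Continuous.subtype_mk
    exact continuous_finsetSum _ fun j _ => (bco_cont j).mul continuous_const

lemma affS_apply {n : ℕ} (v : Fin (n + 1) → Fin 2) (t : TopSimplex n) :
    (affS v t : ℝ) = ∑ j, bco t j * (((v j : ℕ) : ℝ)) := rfl

lemma affS_comp {m n : ℕ} (v : Fin (n + 1) → Fin 2) (w : Fin (m + 1) → Fin (n + 1)) :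
    ContinuousMap.comp (affS v) (vertAffine w) = affS (fun j => v (w j)) := by
  ext t
  rw [ContinuousMap.comp_apply, affS_apply, affS_apply]
  simp only [bco_vert, Finset.sum_mul]
  rw [← Finset.sum_fiberwise_of_maps_to (s := Finset.univ) (t := Finset.univ)
    (fun i _ => Finset.mem_univ (w i)) (fun i => bco t i * ((v (w i) : ℕ) : ℝ))]
  refine Finset.sum_congr rfl fun j _ => Finset.sum_congr rfl fun i hi => ?_
  rw [(Finset.mem_filter.mp hi).2]

lemma affS_zero : affS (fun _ : Fin 1 => 0) = const0 := by
  ext t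
  rw [affS_apply]
  simp [const0]

lemma affS_one : affS (fun _ : Fin 1 => 1) = const1 := by
  ext t
  have := bco_sum t
  rw [affS_apply]
  simp only [Fin.val_one, Nat.cast_one, mul_one, this, const1]
  rfl

end FwdHelpers

lemma fwd_dir {k : Type} [CommRing k] (A : DGA k) (x₀ x₁ : A.A)
    (H : MCStronglyHomotopic A x₀ x₁) : A.HomotopyGaugeEquiv x₀ x₁ := by
  obtain ⟨X, ⟨hgr, hdeg, -, hmc⟩, h0, h1⟩ := H
  have one_d : A.d 1 = 0 := by
    have h := A.leibniz 0 1 (SetLike.GradedOne.one_mem) 1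
    simpa using h
  -- edges
  have c0 : ∀ v : Fin 1 → Fin 2, v 0 = 0 → X 0 (affS v) = x₀ := by
    intro v hv
    rw [← h0, ← affS_zero]
    congr 2; funext j; rw [Subsingleton.elim j 0, hv]
  have c1 : ∀ v : Fin 1 → Fin 2, v 0 = 1 → X 0 (affS v) = x₁ := by
    intro v hv
    rw [← h1, ← affS_one]
    congr 2; funext j; rw [Subsingleton.elim j 0, hv]
  have e : ∀ a b : Fin 2, ∀ v : Fin 2 → Fin 2, v 0 = a → v 1 = b →
      X 1 (affS v) = X 1 (affS ![a, b]) := by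
    intro a b v ha hb
    congr 2; funext j; fin_cases j <;> simp [ha, hb]
  have z : ∀ a : Fin 2, ∀ v : Fin 1 → Fin 2, v 0 = a →
      X 0 (affS v) = X 0 (affS (fun _ => a)) := by
    intro a v ha
    congr 2; funext j; rw [Subsingleton.elim j 0, ha]
  have t : ∀ a b c : Fin 2, ∀ v : Fin 3 → Fin 2, v 0 = a → v 1 = b → v 2 = c →
      X 2 (affS v) = X 2 (affS ![a, b, c]) := by
    intro a b c v ha hb hc
    congr 2; funext j; fin_cases j <;> simp [ha, hb, hc]
  have dg : ∀ a : Fin 2, X 1 (affS ![a, a]) = 0 := by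
    intro a
    have := hdeg 0 0 (affS (fun _ => a))
    rw [degenMap, affS_comp] at this
    rw [← this]
    congr 2; funext j; fin_cases j <;> rfl
  have E1 : ∀ a b : Fin 2, ∀ x y, X 0 (affS (fun _ : Fin 1 => a)) = x →
      X 0 (affS (fun _ : Fin 1 => b)) = y →
      A.d (X 1 (affS ![a, b])) - (y - x) + x * X 1 (affS ![a, b]) - X 1 (affS ![a, b]) * y = 0 := by
    rintro a b x y rfl rfl
    have := hmc 0 (affS ![a, b])
    simp only [faceMap, frontMap, backMap, affS_comp] at this
    erw [Fin.sum_univ_two, Fin.sum_univ_two] at this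
    have key : ∀ (f0 f1 p0 : Fin 1 → Fin 2) (q0 p1 : Fin 2 → Fin 2) (q1 : Fin 1 → Fin 2),
        f0 0 = b → f1 0 = a → p0 0 = a → q0 0 = a → q0 1 = b → p1 0 = a → p1 1 = b → q1 0 = b →
        A.d (X 1 (affS ![a, b])) + (-1:ℤ) • ((1:ℤ) • X 0 (affS f0) + (-1:ℤ) • X 0 (affS f1)) +
        ((1:ℤ) • (X 0 (affS p0) * X 1 (affS q0)) + (-1:ℤ) • (X 1 (affS p1) * X 0 (affS q1))) = 0 →
        A.d (X 1 (affS ![a, b])) - (X 0 (affS fun _ => b) - X 0 (affS fun _ => a)) +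
        X 0 (affS fun _ => a) * X 1 (affS ![a, b]) -
        X 1 (affS ![a, b]) * X 0 (affS fun _ => b) = 0 := by
      intro f0 f1 p0 q0 p1 q1 h1 h2 h3 h4 h5 h6 h7 h8 h
      rw [z b f0 h1, z a f1 h2, z a p0 h3, e a b q0 h4 h5, e a b p1 h6 h7, z b q1 h8] at h
      refine Eq.trans ?_ h
      noncomm_ring
    exact key _ _ _ _ _ _ rfl rfl rfl rfl rfl rfl rfl rfl this
  have E2 : ∀ a b : Fin 2, ∀ x, X 0 (affS (fun _ : Fin 1 => a)) = x →
      A.d (X 2 (affS ![a, b, a])) + (X 1 (affS ![b, a]) + X 1 (affS ![a, b]))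
        + (x * X 2 (affS ![a, b, a]) + X 1 (affS ![a, b]) * X 1 (affS ![b, a])
          + X 2 (affS ![a, b, a]) * x) = 0 := by
    rintro a b x rfl
    have := hmc 1 (affS ![a, b, a])
    simp only [faceMap, frontMap, backMap, affS_comp] at this
    erw [Fin.sum_univ_three, Fin.sum_univ_three] at this
    have key : ∀ (f0 f1 f2 : Fin 2 → Fin 2) (p0 : Fin 1 → Fin 2) (q0 : Fin 3 → Fin 2)
        (p1 q1 : Fin 2 → Fin 2) (p2 : Fin 3 → Fin 2) (q2 : Fin 1 → Fin 2),
        f0 0 = b → f0 1 = a → f1 0 = a → f1 1 = a → f2 0 = a → f2 1 = b →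
        p0 0 = a → q0 0 = a → q0 1 = b → q0 2 = a → p1 0 = a → p1 1 = b → q1 0 = b → q1 1 = a →
        p2 0 = a → p2 1 = b → p2 2 = a → q2 0 = a →
        A.d (X 2 (affS ![a, b, a])) +
          (1:ℤ) • ((1:ℤ) • X 1 (affS f0) + (-1:ℤ) • X 1 (affS f1) + (1:ℤ) • X 1 (affS f2)) +
        ((1:ℤ) • (X 0 (affS p0) * X 2 (affS q0)) + (1:ℤ) • (X 1 (affS p1) * X 1 (affS q1))
          + (1:ℤ) • (X 2 (affS p2) * X 0 (affS q2))) = 0 →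
        A.d (X 2 (affS ![a, b, a])) + (X 1 (affS ![b, a]) + X 1 (affS ![a, b])) +
        (X 0 (affS fun _ => a) * X 2 (affS ![a, b, a]) + X 1 (affS ![a, b]) * X 1 (affS ![b, a]) +
          X 2 (affS ![a, b, a]) * X 0 (affS fun _ => a)) = 0 := by
      intro f0 f1 f2 p0 q0 p1 q1 p2 q2 h1 h2 h3 h4 h5 h6 h7 h8 h9 h10 h11 h12 h13 h14 h15 h16 h17
        h18 h
      rw [e b a f0 h1 h2, e a a f1 h3 h4, e a b f2 h5 h6, dg, z a p0 h7, t a b a q0 h8 h9 h10,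
        e a b p1 h11 h12, e b a q1 h13 h14, t a b a p2 h15 h16 h17, z a q2 h18] at h
      refine Eq.trans ?_ h
      simp
    exact key _ _ _ _ _ _ _ _ _ rfl rfl rfl rfl rfl rfl rfl rfl rfl rfl rfl rfl rfl rfl rfl rfl rfl
      rfl this
  have g1 : ∀ a b, X 1 (affS ![a, b]) ∈ A.gr 0 := fun a b => by simpa using hgr 1 (affS ![a, b])
  have g2 : ∀ a b c, X 2 (affS ![a, b, c]) ∈ A.gr (-1) := fun a b c => by
    simpa using hgr 2 (affS ![a, b, c])
  have o : (1 : A.A) ∈ A.gr 0 := SetLike.GradedOne.one_mem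
  have k0 := c0 (fun _ => 0) rfl
  have k1 := c1 (fun _ => 1) rfl
  refine ⟨1 + X 1 (affS ![1, 0]), add_mem o (g1 _ _), 1 + X 1 (affS ![0, 1]), add_mem o (g1 _ _),
    ?_, ?_, ⟨- X 2 (affS ![0, 1, 0]), neg_mem (g2 _ _ _), ?_⟩,
      ⟨- X 2 (affS ![1, 0, 1]), neg_mem (g2 _ _ _), ?_⟩⟩
  · have := E1 1 0 _ _ k1 k0
    rw [map_add, one_d]; refine Eq.trans ?_ this; noncomm_ring
  · have := E1 0 1 _ _ k0 k1
    rw [map_add, one_d]; refine Eq.trans ?_ this; noncomm_ring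
  · have := E2 0 1 _ k0
    rw [map_neg, ← sub_eq_zero]; refine Eq.trans ?_ this; noncomm_ring
  · have := E2 1 0 _ k1
    rw [map_neg, ← sub_eq_zero]; refine Eq.trans ?_ this; noncomm_ring

section Words

lemma zmod2_cases (a b : ZMod 2) (h : a ≠ b + 1) : a = b := by
  revert a b; decide

lemma zmod2_ne (a : ZMod 2) : a ≠ a + 1 := by
  revert a; decide

lemma zmod2_two (a : ZMod 2) : a + 1 + 1 = a := by
  revert a; decide

open scoped Classical in
/-- value on a word -/
noncomputable def Zw {R : Type} [Ring R] (Y : ℕ → ZMod 2 → R) (n : ℕ) (V : ℕ → ZMod 2) : R :=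
  if ∀ j < n, V (j + 1) = V j + 1 then Y n (V 0) else 0

variable {R : Type} [Ring R] (Y : ℕ → ZMod 2 → R)

lemma Zw_congr (n : ℕ) (V W : ℕ → ZMod 2) (h : ∀ j ≤ n, V j = W j) : Zw Y n V = Zw Y n W := by
  unfold Zw
  have : (∀ j < n, V (j + 1) = V j + 1) ↔ (∀ j < n, W (j + 1) = W j + 1) := by
    refine forall₂_congr fun j hj => ?_
    rw [h j (by omega), h (j + 1) (by omega)]
  rw [h 0 (by omega)]
  simp only [this]

lemma Zw_pos (n : ℕ) (V : ℕ → ZMod 2) (h : ∀ j < n, V (j + 1) = V j + 1) :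
    Zw Y n V = Y n (V 0) := by
  unfold Zw; rw [if_pos h]

lemma Zw_neg (n : ℕ) (V : ℕ → ZMod 2) (j : ℕ) (hj : j < n) (h : V (j + 1) = V j) :
    Zw Y n V = 0 := by
  unfold Zw; rw [if_neg]
  intro h'
  exact zmod2_ne (V j) (h.symm.trans (h' j hj))

/-- face of a word -/
def wface (V : ℕ → ZMod 2) (i : ℕ) : ℕ → ZMod 2 := fun j => V (if j < i then j else j + 1)

lemma alt_shift (n : ℕ) (V : ℕ → ZMod 2) (h : ∀ j < n, V (j + 1) = V j + 1) :
    ∀ p ≤ n, V p = V 0 + (p : ZMod 2) := by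
  intro p
  induction p with
  | zero => simp
  | succ p ih => intro hp; rw [h p (by omega), ih (by omega)]; push_cast; ring

lemma word_eq (d : R →+ R) (e : ℕ → ℕ → ℤ)
    (hE : ∀ (n : ℕ) (i : ZMod 2), d (Y (n + 1) i)
      + (((-1 : ℤˣ) ^ ((n : ℤ) + 1) : ℤˣ) : ℤ) •
        (Y n (i + 1) + (((-1 : ℤˣ) ^ (n + 1) : ℤˣ) : ℤ) • Y n i)
      + ∑ p : Fin (n + 2), e n p • (Y p i * Y (n + 1 - p) (i + ((p : ℕ) : ZMod 2))) = 0)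
    (n : ℕ) (V : ℕ → ZMod 2) :
    d (Zw Y (n + 1) V) + (((-1 : ℤˣ) ^ ((n : ℤ) + 1) : ℤˣ) : ℤ) •
      ∑ i : Fin (n + 2), (((-1 : ℤˣ) ^ (i : ℕ) : ℤˣ) : ℤ) • Zw Y n (wface V i)
      + ∑ p : Fin (n + 2), e n p • (Zw Y p V * Zw Y (n + 1 - p) (fun j => V (j + p))) = 0 := by
  by_cases hV : ∀ j < n + 1, V (j + 1) = V j + 1
  · have h := alt_shift _ V hV
    rw [← hE n (V 0), Zw_pos Y _ V hV]
    congr 1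
    · congr 2
      rw [Fin.sum_univ_succ, Fin.sum_univ_castSucc, Finset.sum_eq_zero]
      · rw [zero_add, Zw_pos Y n (wface V _), Zw_pos Y n (wface V _)]
        · simp [wface, h 1]
        · intro j hj
          simp [wface, hj]
          split_ifs
          · exact hV j (by omega)
          · omega
        · intro j hj
          simp [wface]
          exact hV _ (by omega)
      · rintro ⟨i, hi⟩ -
        rw [Zw_neg Y n _ i hi, smul_zero]
        simp [wface]
        rw [hV _ (by omega), hV _ (by omega), zmod2_two]
    · refine Finset.sum_congr rfl ?_
      rintro ⟨p, hp⟩ -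
      simp only
      rw [Zw_pos, Zw_pos, ← h p (by omega), zero_add]
      · intro j hj
        rw [← hV (j + p) (by omega)]; congr 1; omega
      · intro j hj; exact hV j (by omega)
  · push Not at hV
    obtain ⟨j, hj, hne⟩ := hV
    have he := zmod2_cases _ _ hne
    rw [Zw_neg Y _ V j hj he, map_zero, zero_add]
    rw [Finset.sum_eq_add (⟨j, by omega⟩ : Fin (n + 2)) ⟨j + 1, by omega⟩, Finset.sum_eq_zero]
    · have : Zw Y n (wface V j) = Zw Y n (wface V (j + 1)) := by
        apply Zw_congr
        intro m hm
        unfold wface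
        rcases lt_trichotomy m j with h | h | h
        · rw [if_pos h, if_pos (by omega)]
        · subst h; simp [he]
        · rw [if_neg (by omega), if_neg (by omega)]
      simp only
      rw [this, pow_succ]
      simp
    · rintro ⟨p, hp⟩ -
      simp only
      by_cases hpj : p ≤ j
      · rw [Zw_neg Y (n + 1 - p) _ (j - p) (by omega), mul_zero, smul_zero]
        rw [show j - p + 1 + p = j + 1 by omega, show j - p + p = j by omega, he]
      · rw [Zw_neg Y p _ j (by omega) he, zero_mul, smul_zero]
    · simp
    · rintro ⟨i, hi⟩ - ⟨h1, h2⟩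
      simp at h1 h2
      simp only
      by_cases hij : i < j
      · rw [Zw_neg Y n _ (j - 1) (by omega), smul_zero]
        unfold wface
        rw [if_neg (by omega), if_neg (by omega), show j - 1 + 1 = j by omega, he]
      · rw [Zw_neg Y n _ j (by omega), smul_zero]
        unfold wface
        rw [if_pos (by omega), if_pos (by omega), he]
    · simp
    · simp

end Words

section Cochain

open scoped Classical in
/-- vertex word of a singular simplex -/
noncomputable def wd {n : ℕ} (σ : SingN unitInterval n) : ℕ → ZMod 2 := fun j =>
  if h : j < n + 1 then (if σ (vertexPt n ⟨j, h⟩) = 0 then 0 else 1) else 0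

lemma vert_vertex {m n : ℕ} (w : Fin (m + 1) → Fin (n + 1)) (j : Fin (m + 1)) :
    vertAffine w (vertexPt m j) = vertexPt n (w j) := by
  apply Subtype.ext
  funext l
  change (∑ i ∈ Finset.univ.filter (fun i => w i = l), if i = j then (1 : ℝ) else 0)
    = if l = w j then 1 else 0
  rw [Finset.sum_ite_eq']
  simp [eq_comm]

lemma wd_comp {m n : ℕ} (σ : SingN unitInterval n) (w : Fin (m + 1) → Fin (n + 1)) (j : ℕ)
    (hj : j < m + 1) : wd (ContinuousMap.comp σ (vertAffine w)) j = wd σ (w ⟨j, hj⟩) := by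
  unfold wd
  rw [dif_pos hj, dif_pos (w ⟨j, hj⟩).isLt, ContinuousMap.comp_apply, vert_vertex]

lemma bwd_of_words {k : Type} [CommRing k] (A : DGA k) (x₀ x₁ : A.A)
    (hx₀ : A.IsMC x₀) (hx₁ : A.IsMC x₁) (Y : ℕ → ZMod 2 → A.A)
    (hgr : ∀ (n : ℕ) i, Y n i ∈ A.gr (1 - (n : ℤ))) (h0 : Y 0 0 = x₀) (h1 : Y 0 1 = x₁)
    (hE : ∀ (n : ℕ) (i : ZMod 2), A.d (Y (n + 1) i)
      + (((-1 : ℤˣ) ^ ((n : ℤ) + 1) : ℤˣ) : ℤ) •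
        (Y n (i + 1) + (((-1 : ℤˣ) ^ (n + 1) : ℤˣ) : ℤ) • Y n i)
      + ∑ p : Fin (n + 2),
        (((-1 : ℤˣ) ^ (((p : ℕ) : ℤ) * (1 - ((n : ℤ) + 1 - ((p : ℕ) : ℤ)))) : ℤˣ) : ℤ) •
          (Y p i * Y (n + 1 - p) (i + ((p : ℕ) : ZMod 2))) = 0) :
    MCStronglyHomotopic A x₀ x₁ := by
  refine ⟨fun n σ => Zw Y n (wd σ), ⟨?_, ?_, ?_, ?_⟩, ?_, ?_⟩
  · intro n σ
    change Zw Y n (wd σ) ∈ _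
    unfold Zw
    split_ifs
    · exact hgr _ _
    · exact zero_mem _
  · intro n i τ
    apply Zw_neg Y _ _ i i.isLt
    unfold degenMap
    rw [wd_comp _ _ _ (by omega), wd_comp _ _ _ (by omega)]
    congr 2
    rw [show (⟨(i : ℕ) + 1, by omega⟩ : Fin (n + 2)) = i.succ from rfl,
      show (⟨(i : ℕ), by omega⟩ : Fin (n + 2)) = i.castSucc from rfl]
    simp
  · intro σ
    have e0 : Zw Y 0 (wd σ) = Y 0 (wd σ 0) := Zw_pos _ _ _ (by simp)
    simp only [e0]
    rcases (show ∀ a : ZMod 2, a = 0 ∨ a = 1 by decide) (wd σ 0) with h | h <;> rw [h]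
    · rw [h0]; exact hx₀.2
    · rw [h1]; exact hx₁.2
  · intro n σ
    have := word_eq Y A.d.toAddMonoidHom (fun n p =>
      (((-1 : ℤˣ) ^ ((p : ℤ) * (1 - ((n : ℤ) + 1 - (p : ℤ)))) : ℤˣ) : ℤ)) hE n (wd σ)
    refine Eq.trans ?_ this
    congr 1
    · congr 2
      refine Finset.sum_congr rfl fun i _ => ?_
      congr 1
      apply Zw_congr
      intro j hj
      unfold faceMap
      rw [wd_comp _ _ _ (by omega)]
      unfold wface
      congr 1
      simp only [Fin.succAbove, Fin.lt_def, Fin.val_castSucc]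
      split_ifs <;> simp
    · refine Finset.sum_congr rfl fun p _ => ?_
      congr 2
      · apply Zw_congr
        intro j hj
        unfold frontMap
        rw [wd_comp _ _ _ (by omega)]
        rfl
      · apply Zw_congr
        intro j hj
        unfold backMap
        rw [wd_comp _ _ _ (by omega)]
        congr 1
        simp only
        omega
  · have e0 : Zw Y 0 (wd const0) = Y 0 (wd const0 0) := Zw_pos _ _ _ (by simp)
    simp only [e0]
    rw [← h0]
    congr 1
    simp [wd, const0]
  · have e0 : Zw Y 0 (wd const1) = Y 0 (wd const1 0) := Zw_pos _ _ _ (by simp)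
    simp only [e0]
    rw [← h1]
    congr 1
    simp [wd, const1]

end Cochain

section Algebra

/-- 2 by 2 matrix -/
def m2 {R : Type} (a b c d : R) : Matrix (ZMod 2) (ZMod 2) R := Matrix.of fun i j =>
  if i = 0 then (if j = 0 then a else b) else (if j = 0 then c else d)

lemma zsum {R : Type} [AddCommMonoid R] (f : ZMod 2 → R) : ∑ i, f i = f 0 + f 1 :=
  Fin.sum_univ_two f

lemma z01 : ∀ a : ZMod 2, a = 0 ∨ a = 1 := by decide

lemma m2_mul {R : Type} [Ring R] (a b c d a' b' c' d' : R) :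
    m2 a b c d * m2 a' b' c' d' =
      m2 (a * a' + b * c') (a * b' + b * d') (c * a' + d * c') (c * b' + d * d') := by
  ext i j
  rw [Matrix.mul_apply, zsum]
  rcases z01 i with rfl | rfl <;> rcases z01 j with rfl | rfl <;> simp [m2]

lemma m2_add {R : Type} [Ring R] (a b c d a' b' c' d' : R) :
    m2 a b c d + m2 a' b' c' d' = m2 (a + a') (b + b') (c + c') (d + d') := by
  ext i j
  rcases z01 i with rfl | rfl <;> rcases z01 j with rfl | rfl <;> simp [m2]

lemma m2_zero {R : Type} [Ring R] : (0 : Matrix (ZMod 2) (ZMod 2) R) = m2 0 0 0 0 := by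
  ext i j
  rcases z01 i with rfl | rfl <;> rcases z01 j with rfl | rfl <;> simp [m2]

lemma m2_one {R : Type} [Ring R] : (1 : Matrix (ZMod 2) (ZMod 2) R) = m2 1 0 0 1 := by
  ext i j
  rcases z01 i with rfl | rfl <;> rcases z01 j with rfl | rfl <;> simp [m2]

/-- sign of a parity -/
def sg (i : ZMod 2) : ℤ := if i = 0 then 1 else -1

lemma sg_add : ∀ i j, sg (i + j) = sg i * sg j := by decide
lemma sg_sq : ∀ i, sg i * sg i = 1 := by decide
lemma sg_nat (n : ℕ) : sg (n : ZMod 2) = (-1) ^ n := by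
  induction n with
  | zero => rfl
  | succ n ih => push_cast; rw [sg_add, ih, pow_succ]; rfl

variable {k : Type} [CommRing k] (A : DGA k)

/-- matrices over `A` -/
abbrev MA := Matrix (ZMod 2) (ZMod 2) A.A
/-- power series of matrices over `A` -/
abbrev SA := PowerSeries (MA A)

/-- differential on matrices -/
def Dm : MA A →+ MA A where
  toFun a := Matrix.of fun i j => sg i • A.d (a i j)
  map_zero' := by ext i j; simp
  map_add' a b := by ext i j; simp

lemma Dm_apply (a : MA A) (i j) : Dm A a i j = sg i • A.d (a i j) := rfl

/-- differential on power series -/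
noncomputable def Ds : SA A →+ SA A where
  toFun a := PowerSeries.mk fun n => Dm A (PowerSeries.coeff n a)
  map_zero' := by ext n : 1; simp
  map_add' a b := by ext n : 1; simp

lemma coeff_Ds (a : SA A) (n : ℕ) :
    PowerSeries.coeff n (Ds A a) = Dm A (PowerSeries.coeff n a) := by
  simp [Ds]

/-- homogeneity -/
def Hmg (e : ℤ) (ε : ZMod 2) (a : SA A) : Prop :=
  ∀ (n : ℕ) (i j : ZMod 2), PowerSeries.coeff n a i j ∈ A.gr (e - n) ∧
    (i + j + n ≠ ε → PowerSeries.coeff n a i j = 0)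

variable {A}

lemma Hmg.add {e ε} {a b : SA A} (ha : Hmg A e ε a) (hb : Hmg A e ε b) : Hmg A e ε (a + b) := by
  intro n i j
  rw [map_add, Matrix.add_apply]
  exact ⟨add_mem (ha n i j).1 (hb n i j).1, fun h => by
    rw [(ha n i j).2 h, (hb n i j).2 h, add_zero]⟩

lemma Hmg.neg {e ε} {a : SA A} (ha : Hmg A e ε a) : Hmg A e ε (-a) := by
  intro n i j
  rw [map_neg, Matrix.neg_apply]
  exact ⟨neg_mem (ha n i j).1, fun h => by rw [(ha n i j).2 h, neg_zero]⟩

lemma Hmg.sub {e ε} {a b : SA A} (ha : Hmg A e ε a) (hb : Hmg A e ε b) : Hmg A e ε (a - b) := by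
  rw [sub_eq_add_neg]; exact ha.add hb.neg

lemma Hmg.zero {e ε} : Hmg A e ε 0 := by
  intro n i j
  simp

lemma Hmg.mul {e ε e' ε'} {a b : SA A} (ha : Hmg A e ε a) (hb : Hmg A e' ε' b) :
    Hmg A (e + e') (ε + ε') (a * b) := by
  intro n i j
  rw [PowerSeries.coeff_mul, Matrix.sum_apply]
  simp only [Matrix.mul_apply]
  constructor
  · refine sum_mem fun p hp => sum_mem fun l _ => ?_
    have hp := Finset.HasAntidiagonal.mem_antidiagonal.mp hp
    have := SetLike.GradedMul.mul_mem (ha p.1 i l).1 (hb p.2 l j).1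
    convert this using 2
    rw [← hp]; push_cast; ring
  · intro h
    refine Finset.sum_eq_zero fun p hp => Finset.sum_eq_zero fun l _ => ?_
    have hp := Finset.HasAntidiagonal.mem_antidiagonal.mp hp
    by_cases h1 : i + l + p.1 = ε
    · rw [(hb p.2 l j).2, mul_zero]
      rintro h2
      apply h
      rw [← h1, ← h2, ← hp]; push_cast
      have : l + l = 0 := (show ∀ l : ZMod 2, l + l = 0 by decide) l
      linear_combination - this
    · rw [(ha p.1 i l).2 h1, zero_mul]

lemma Hmg.C {e ε} (m : MA A) (h : ∀ i j, m i j ∈ A.gr e ∧ (i + j ≠ ε → m i j = 0)) :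
    Hmg A e ε (PowerSeries.C m) := by
  intro n i j
  rw [PowerSeries.coeff_C]
  split_ifs with hn
  · subst hn; simpa using h i j
  · simp

lemma one_gr : (1 : A.A) ∈ A.gr 0 := SetLike.GradedOne.one_mem

lemma Hmg.one : Hmg A 0 0 (1 : SA A) := by
  have := Hmg.C (A := A) (e := 0) (ε := 0) 1 (by
    intro i j
    rw [Matrix.one_apply]
    split_ifs with h
    · subst h
      exact ⟨one_gr, fun h => absurd (by revert i; decide) h⟩
    · simp)
  rwa [map_one] at this

lemma Hmg.X : Hmg A 1 1 (PowerSeries.X : SA A) := by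
  intro n i j
  rw [PowerSeries.coeff_X]
  split_ifs with hn
  · subst hn
    rw [Matrix.one_apply]
    split_ifs with h
    · subst h
      refine ⟨by simpa using one_gr, fun h => absurd (by revert i; decide) h⟩
    · simp
  · simp

lemma Ds_C (m : MA A) : Ds A (PowerSeries.C m) = PowerSeries.C (Dm A m) := by
  ext n : 1
  rw [coeff_Ds, PowerSeries.coeff_C, PowerSeries.coeff_C]
  split_ifs <;> simp

lemma Ds_X_mul (a : SA A) : Ds A (PowerSeries.X * a) = PowerSeries.X * Ds A a := by
  ext n : 1
  rw [coeff_Ds]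
  cases n with
  | zero => simp
  | succ n => rw [PowerSeries.coeff_succ_X_mul, PowerSeries.coeff_succ_X_mul, coeff_Ds]

lemma d_one : A.d 1 = 0 := by
  have h := A.leibniz 0 1 one_gr 1
  simpa using h

lemma Ds_one : Ds A 1 = 0 := by
  rw [← map_one (PowerSeries.C), Ds_C]
  convert map_zero (PowerSeries.C (R := MA A))
  ext i j
  rw [Dm_apply, Matrix.one_apply]
  split_ifs <;> simp [d_one]

lemma Ds_mul {ε} {a : SA A} (ha : Hmg A 0 ε a) (b : SA A) :
    Ds A (a * b) = Ds A a * b + sg ε • (a * Ds A b) := by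
  ext n i j
  rw [coeff_Ds, Dm_apply, map_add, map_zsmul, Matrix.add_apply, Matrix.smul_apply,
    PowerSeries.coeff_mul, PowerSeries.coeff_mul, PowerSeries.coeff_mul,
    Matrix.sum_apply, Matrix.sum_apply, Matrix.sum_apply]
  simp only [Matrix.mul_apply, coeff_Ds, Dm_apply, map_sum, Finset.smul_sum,
    ← Finset.sum_add_distrib]
  refine Finset.sum_congr rfl fun p _ => Finset.sum_congr rfl fun l _ => ?_
  rw [A.leibniz _ _ (ha p.1 i l).1]
  rw [smul_add, smul_mul_assoc]
  congr 1
  by_cases h : i + l + p.1 = ε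
  · rw [mul_smul_comm, smul_smul, smul_smul]
    congr 1
    rw [← h, sg_add, sg_add, sg_nat]
    have : (((-1 : ℤˣ) ^ (0 - (p.1 : ℤ)) : ℤˣ) : ℤ) = (-1) ^ p.1 := by
      rw [zero_sub, zpow_neg, zpow_natCast]
      rcases neg_one_pow_eq_or ℤˣ p.1 with h | h
      · have := congrArg (Units.val) h
        push_cast at this
        rw [h, this]; simp
      · have := congrArg (Units.val) h
        push_cast at this
        rw [h, this]; simp
    rw [this]
    linear_combination (- sg i * (-1) ^ p.1) * sg_sq l
  · rw [(ha p.1 i l).2 h]; simp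

/-- agreement of coefficients below `N` -/
def Agr (N : ℕ) (a b : SA A) : Prop := ∀ n < N, PowerSeries.coeff n a = PowerSeries.coeff n b

lemma Agr.add {N} {a b a' b' : SA A} (h : Agr N a b) (h' : Agr N a' b') :
    Agr N (a + a') (b + b') := fun n hn => by rw [map_add, map_add, h n hn, h' n hn]

lemma Agr.mul {N} {a b a' b' : SA A} (h : Agr N a b) (h' : Agr N a' b') :
    Agr N (a * a') (b * b') := fun n hn => by
  rw [PowerSeries.coeff_mul, PowerSeries.coeff_mul]
  refine Finset.sum_congr rfl fun p hp => ?_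
  have hp := Finset.HasAntidiagonal.mem_antidiagonal.mp hp
  rw [h _ (by omega), h' _ (by omega)]

lemma Agr.refl {N} (a : SA A) : Agr N a a := fun _ _ => rfl

lemma Agr.D {N} {a b : SA A} (h : Agr N a b) : Agr N (Ds A a) (Ds A b) := fun n hn => by
  rw [coeff_Ds, coeff_Ds, h n hn]

lemma agr_pow {a : SA A} (h : PowerSeries.coeff 0 a = 0) (N : ℕ) (b : SA A) :
    Agr N (a ^ N * b) 0 := by
  obtain ⟨m, rfl⟩ := PowerSeries.X_dvd_iff.mpr (by simpa using h)
  intro n hn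
  have hc : Commute (PowerSeries.X : SA A) m := (PowerSeries.commute_X m).symm
  rw [hc.mul_pow, mul_assoc, PowerSeries.coeff_X_pow_mul', if_neg (by omega), map_zero]

end Algebra

section Main

variable {k : Type} [CommRing k] {A : DGA k}

lemma kons {x y : A.A} (hx : A.IsMC x) (hy : A.IsMC y) (H : A.HomotopyGaugeEquiv x y) :
    ∃ f ∈ A.gr 0, ∃ b ∈ A.gr 0, ∃ σ ∈ A.gr (-1), ∃ τ ∈ A.gr (-1), ∃ r ∈ A.gr (-2),
      A.d f = f * y - x * f ∧ A.d b = b * x - y * b ∧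
      A.d σ = 1 - f * b - x * σ - σ * x ∧
      A.d τ = b * f - 1 - y * τ - τ * y ∧
      A.d r = r * y - x * r - f * τ - σ * f := by
  obtain ⟨b, hb, f, hf, eb, ef, ⟨s, hs, es⟩, ⟨t, ht, et⟩⟩ := H
  have eb : A.d b = b * x - y * b := by rw [← sub_eq_zero, ← eb]; abel
  have ef : A.d f = f * y - x * f := by rw [← sub_eq_zero, ← ef]; abel
  have es : A.d s = f * b - 1 - x * s - s * x := by rw [es]; abel
  have et : A.d t = b * f - 1 - y * t - t * y := by rw [et]; abel
  have Lf : ∀ c, A.d (f * c) = A.d f * c + f * A.d c := fun c => by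
    simpa using A.leibniz 0 f hf c
  have Lb : ∀ c, A.d (b * c) = A.d b * c + b * A.d c := fun c => by
    simpa using A.leibniz 0 b hb c
  have Ls : ∀ c, A.d (s * c) = A.d s * c - s * A.d c := fun c => by
    simpa [sub_eq_add_neg] using A.leibniz (-1) s hs c
  obtain ⟨z, hz⟩ : ∃ z, z = s * f - f * t := ⟨_, rfl⟩
  have gz : z ∈ A.gr (-1) := by
    rw [hz]
    refine sub_mem ?_ ?_
    · simpa using SetLike.GradedMul.mul_mem hs hf
    · simpa using SetLike.GradedMul.mul_mem hf ht
  have ez : A.d z = - x * z - z * y := by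
    rw [hz, map_sub, Ls, Lf, es, et, ef]
    noncomm_ring
  refine ⟨f, hf, b, hb, -s, neg_mem hs, t + b * z, add_mem ht ?_, - (s * z), neg_mem ?_,
    ef, eb, ?_, ?_, ?_⟩
  · simpa using SetLike.GradedMul.mul_mem hb gz
  · simpa using SetLike.GradedMul.mul_mem hs gz
  · rw [map_neg, es]; noncomm_ring
  · rw [map_add, Lb, et, eb, ez]; noncomm_ring
  · rw [map_neg, Ls, es, ez]
    have : s * f = z + f * t := by rw [hz]; abel
    have h2 : -s * f = - (z + f * t) := by rw [← this]; noncomm_ring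
    rw [h2]
    noncomm_ring

/-- iterated approximations of the Catalan series -/
noncomputable def cser (κ : SA A) : ℕ → SA A
  | 0 => 0
  | N + 1 => 1 - κ * κ * (cser κ N * cser κ N)

lemma cser_comm (κ : SA A) (N : ℕ) : Commute κ (cser κ N) := by
  induction N with
  | zero => exact Commute.zero_right _
  | succ N ih =>
    unfold cser
    exact (Commute.one_right _).sub_right
      (((Commute.refl κ).mul_right (Commute.refl κ)).mul_right (ih.mul_right ih))

lemma cser_comm' (κ : SA A) (N : ℕ) : Commute (cser κ N) (cser κ (N + 1)) := by
  have h := (cser_comm κ N).symm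
  rw [cser]
  exact (Commute.one_right _).sub_right ((h.mul_right h).mul_right
    ((Commute.refl _).mul_right (Commute.refl _)))

lemma cser_diff (κ : SA A) (N : ℕ) : ∃ e, cser κ N - cser κ (N + 1) = (κ * κ) ^ N * e := by
  induction N with
  | zero => exact ⟨_, by rw [pow_zero, one_mul]⟩
  | succ N ih =>
    obtain ⟨e, he⟩ := ih
    refine ⟨- (e * (cser κ N + cser κ (N + 1))), ?_⟩
    have h := cser_comm' κ N
    rw [pow_succ', mul_assoc, mul_neg, ← mul_assoc _ e, ← he, cser.eq_2 κ (N + 1)]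
    nth_rewrite 1 [cser.eq_2 κ N]
    have : (cser κ N - cser κ (N + 1)) * (cser κ N + cser κ (N + 1)) =
        cser κ N * cser κ N - cser κ (N + 1) * cser κ (N + 1) := by
      rw [sub_mul, mul_add, mul_add, h.eq]; abel
    rw [this]
    noncomm_ring

lemma cser_hmg {κ : SA A} (hκ : Hmg A 0 1 κ) (N : ℕ) : Hmg A 0 0 (cser κ N) := by
  induction N with
  | zero => exact Hmg.zero
  | succ N ih => exact Hmg.one.sub ((hκ.mul hκ).mul (ih.mul ih))

lemma tw_mul {Φ a b : SA A} (ha : Hmg A 0 0 a) (h1 : Ds A a = a * Φ - Φ * a)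
    (h2 : Ds A b = b * Φ - Φ * b) : Ds A (a * b) = a * b * Φ - Φ * (a * b) := by
  rw [Ds_mul ha, h1, h2, show sg 0 = 1 from rfl]
  noncomm_ring

lemma cser_D {Φ κ : SA A} (hκ : Hmg A 0 1 κ)
    (h : Ds A κ = PowerSeries.X - Φ * κ - κ * Φ) (N : ℕ) :
    Ds A (cser κ N) = cser κ N * Φ - Φ * cser κ N := by
  induction N with
  | zero => simp [cser]
  | succ N ih =>
    have hκκ : Ds A (κ * κ) = κ * κ * Φ - Φ * (κ * κ) := by
      rw [Ds_mul hκ, h, show sg 1 = -1 from rfl, mul_sub κ, mul_sub κ,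
        PowerSeries.commute_X κ |>.eq]
      noncomm_ring
    have h3 := tw_mul (hκ.mul hκ) hκκ (tw_mul (cser_hmg hκ N) ih ih)
    rw [cser, map_sub, Ds_one, h3]
    noncomm_ring

lemma G_eq {Φ κ : SA A} (hκ : Hmg A 0 1 κ)
    (h : Ds A κ = PowerSeries.X - Φ * κ - κ * Φ) (hΦ : Ds A Φ = - (Φ * Φ)) (N : ℕ)
    (G : SA A) (hG : G = Φ + PowerSeries.X * (κ * cser κ N)) :
    Ds A G + G * G = PowerSeries.X * (PowerSeries.X * (1 + (cser κ N - cser κ (N + 1)))) := by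
  have hφ : Ds A (κ * cser κ N) = PowerSeries.X * cser κ N - Φ * (κ * cser κ N)
      - (κ * cser κ N) * Φ := by
    rw [Ds_mul hκ, h, cser_D hκ h, show sg 1 = -1 from rfl]
    noncomm_ring
  have hsq : (κ * cser κ N) * (κ * cser κ N) = κ * κ * (cser κ N * cser κ N) := by
    have := (cser_comm κ N).eq
    rw [mul_assoc κ (cser κ N), ← mul_assoc (cser κ N) κ, ← this]; noncomm_ring
  rw [hG, map_add, Ds_X_mul, hφ, hΦ, cser.eq_2]
  generalize cser κ N = c at *
  obtain ⟨φ, hφ'⟩ : ∃ φ, φ = κ * c := ⟨_, rfl⟩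
  rw [← hφ'] at hsq ⊢
  have hX := (PowerSeries.commute_X Φ).eq
  have hX' := (PowerSeries.commute_X φ).eq
  have e1 : Φ * (PowerSeries.X * φ) = PowerSeries.X * (Φ * φ) := by
    rw [← mul_assoc, hX, mul_assoc]
  have e2 : PowerSeries.X * φ * (PowerSeries.X * φ) =
      PowerSeries.X * (PowerSeries.X * (φ * φ)) := by
    rw [mul_assoc, ← mul_assoc φ, hX', mul_assoc]
  rw [mul_add (Φ + _), add_mul, add_mul, e1, e2, hsq]
  noncomm_ring

/-- swap matrix -/
def Jm : MA A := m2 0 1 1 0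

lemma Jm_sq : (Jm : MA A) * Jm = 1 := by
  rw [Jm, m2_mul, m2_one]; simp

lemma series_exists {Φ κ : SA A} (hκ : Hmg A 0 1 κ) (hκ0 : PowerSeries.coeff 0 (κ * κ) = 0)
    (h : Ds A κ = PowerSeries.X - Φ * κ - κ * Φ) (hΦ : Ds A Φ = - (Φ * Φ)) (hΦh : Hmg A 1 0 Φ) :
    ∃ T : SA A, Hmg A 1 0 T ∧ PowerSeries.coeff 0 T = PowerSeries.coeff 0 Φ ∧
      Ds A T + T * T + PowerSeries.X * (PowerSeries.C Jm * T + T * PowerSeries.C Jm) = 0 := by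
  have hJ : Hmg A 0 1 (PowerSeries.C (Jm : MA A)) := by
    refine Hmg.C _ fun i j => ?_
    rcases z01 i with rfl | rfl <;> rcases z01 j with rfl | rfl <;>
      simp [Jm, m2, one_gr, show (1 : ZMod 2) + 1 = 0 from rfl]
  have hDJ : Ds A (PowerSeries.C (Jm : MA A)) = 0 := by
    rw [Ds_C]
    convert map_zero (PowerSeries.C (R := MA A))
    ext i j
    rw [Dm_apply]
    rcases z01 i with rfl | rfl <;> rcases z01 j with rfl | rfl <;> simp [Jm, m2, d_one]
  have hJJ : PowerSeries.C (Jm : MA A) * PowerSeries.C (Jm : MA A) = 1 := by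
    rw [← map_mul, Jm_sq, map_one]
  let TN : ℕ → SA A := fun N => Φ + PowerSeries.X * (κ * cser κ N) -
    PowerSeries.X * PowerSeries.C Jm
  have hTh : ∀ N, Hmg A 1 0 (TN N) := fun N =>
    (hΦh.add (Hmg.X.mul (hκ.mul (cser_hmg hκ N)))).sub (Hmg.X.mul hJ)
  have hst : ∀ N M, N ≤ M → Agr N (TN N) (TN M) := by
    intro N M hNM
    induction M, hNM using Nat.le_induction with
    | base => exact Agr.refl _
    | succ M hNM ih =>
      intro n hn
      rw [ih n hn]
      obtain ⟨e, he⟩ := cser_diff κ M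
      have h1 : TN M = TN (M + 1) + PowerSeries.X * κ * ((κ * κ) ^ M * e) := by
        simp only [TN]
        rw [← he]; noncomm_ring
      rw [h1]
      have := (Agr.refl (N := M) (TN (M + 1))).add
        ((Agr.refl (PowerSeries.X * κ)).mul (agr_pow hκ0 M e)) n (by omega)
      rw [this]; simp
  let T : SA A := PowerSeries.mk fun n => PowerSeries.coeff n (TN (n + 1))
  have hT : ∀ N, Agr N T (TN N) := by
    intro N n hn
    simp only [T, PowerSeries.coeff_mk]
    exact hst (n + 1) N hn n (by omega)
  refine ⟨T, ?_, ?_, ?_⟩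
  · intro n i j
    rw [hT (n + 1) n (by omega)]
    exact hTh _ n i j
  · rw [hT 1 0 (by omega)]
    simp [TN]
  · ext n : 1
    have a := hT (n + 1)
    have := ((a.D.add (a.mul a)).add ((Agr.refl PowerSeries.X).mul
      (((Agr.refl (PowerSeries.C Jm)).mul a).add (a.mul (Agr.refl (PowerSeries.C Jm)))))) n (by omega)
    rw [this]
    clear this a
    obtain ⟨e, he⟩ := cser_diff κ (n + 1)
    have hG := G_eq hκ h hΦ (n + 1) _ rfl
    rw [he] at hG
    have key : Ds A (TN (n + 1)) + TN (n + 1) * TN (n + 1) + PowerSeries.X *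
        (PowerSeries.C Jm * TN (n + 1) + TN (n + 1) * PowerSeries.C Jm) =
        PowerSeries.X * PowerSeries.X * ((κ * κ) ^ (n + 1) * e) := by
      simp only [TN]
      generalize Φ + PowerSeries.X * (κ * cser κ (n + 1)) = G at *
      generalize PowerSeries.C (Jm : MA A) = J at *
      rw [map_sub, Ds_X_mul, hDJ]
      have e1 : G * (PowerSeries.X * J) = PowerSeries.X * (G * J) := by
        rw [← mul_assoc, (PowerSeries.commute_X G).eq, mul_assoc]
      have e2 : PowerSeries.X * J * (PowerSeries.X * J) = PowerSeries.X * PowerSeries.X := by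
        rw [mul_assoc, ← mul_assoc J, (PowerSeries.commute_X J).eq, mul_assoc, hJJ, mul_one]
      have e3 : J * (PowerSeries.X * J) = PowerSeries.X := by
        rw [← mul_assoc, (PowerSeries.commute_X J).eq, mul_assoc, hJJ, mul_one]
      have e4 : (PowerSeries.X * J) * J = PowerSeries.X := by
        rw [mul_assoc, hJJ, mul_one]
      have e5 : Ds A G = PowerSeries.X * (PowerSeries.X * (1 + (κ * κ) ^ (n + 1) * e)) - G * G := by
        rw [← hG]; abel
      rw [e5, mul_sub (G - _), sub_mul G, sub_mul G, e1, e2, mul_sub J, sub_mul G, e3, e4]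
      noncomm_ring
    rw [key]
    have := ((Agr.refl (N := n + 1) (PowerSeries.X * PowerSeries.X)).mul
      (agr_pow hκ0 (n + 1) e)) n (by omega)
    rw [this]; simp

end Main

section Final

variable {k : Type} [CommRing k] {A : DGA k}

lemma Dm_m2 (a b c d : A.A) :
    Dm A (m2 a b c d) = m2 (A.d a) (A.d b) (- A.d c) (- A.d d) := by
  ext i j
  rw [Dm_apply]
  rcases z01 i with rfl | rfl <;> rcases z01 j with rfl | rfl <;> simp [m2, sg]

lemma T_exists {x y : A.A} (hx : A.IsMC x) (hy : A.IsMC y) (H : A.HomotopyGaugeEquiv x y) :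
    ∃ T : SA A, Hmg A 1 0 T ∧ PowerSeries.coeff 0 T = m2 x 0 0 (-y) ∧
      Ds A T + T * T + PowerSeries.X * (PowerSeries.C Jm * T + T * PowerSeries.C Jm) = 0 := by
  obtain ⟨f, hf, b, hb, σ, hσ, τ, hτ, r, hr, ef, eb, eσ, eτ, er⟩ := kons hx hy H
  have ex : A.d x = - (x * x) := eq_neg_of_add_eq_zero_left hx.2
  have ey : A.d y = - (y * y) := eq_neg_of_add_eq_zero_left hy.2
  obtain ⟨X0, hX0⟩ : ∃ X0 : MA A, X0 = m2 x 0 0 (-y) := ⟨_, rfl⟩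
  obtain ⟨F, hF⟩ : ∃ F : MA A, F = m2 0 f 0 0 := ⟨_, rfl⟩
  obtain ⟨k0, hk0⟩ : ∃ F : MA A, F = m2 0 0 b 0 := ⟨_, rfl⟩
  obtain ⟨k1, hk1⟩ : ∃ F : MA A, F = m2 σ 0 0 τ := ⟨_, rfl⟩
  obtain ⟨k2, hk2⟩ : ∃ F : MA A, F = m2 0 r 0 0 := ⟨_, rfl⟩
  have E1 : Dm A X0 = - (X0 * X0) := by
    rw [eq_neg_iff_add_eq_zero, hX0, Dm_m2, m2_mul, m2_add, m2_zero, map_neg, ex, ey, map_zero]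
    congr 1 <;> noncomm_ring
  have E2 : Dm A F = - (X0 * F + F * X0) := by
    rw [eq_neg_iff_add_eq_zero, hX0, hF, Dm_m2, m2_mul, m2_mul, m2_add, m2_add, m2_zero, ef,
      map_zero]
    congr 1 <;> noncomm_ring
  have E3 : F * F = 0 := by
    rw [hF, m2_mul, m2_zero]; congr 1 <;> noncomm_ring
  have E4 : Dm A k0 = - (X0 * k0 + k0 * X0) := by
    rw [eq_neg_iff_add_eq_zero, hX0, hk0, Dm_m2, m2_mul, m2_mul, m2_add, m2_add, m2_zero, eb,
      map_zero]
    congr 1 <;> noncomm_ring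
  have E5 : Dm A k1 = 1 - (X0 * k1 + k1 * X0 + (F * k0 + k0 * F)) := by
    rw [eq_sub_iff_add_eq, hX0, hk0, hk1, hF, Dm_m2]
    simp only [m2_mul, m2_add, m2_one, eσ, eτ, map_zero]
    congr 1 <;> noncomm_ring
  have E6 : Dm A k2 = - (X0 * k2 + k2 * X0 + (F * k1 + k1 * F)) := by
    rw [eq_neg_iff_add_eq_zero, hX0, hk2, hk1, hF, Dm_m2]
    simp only [m2_mul, m2_add, m2_zero, er, map_zero]
    congr 1 <;> noncomm_ring
  have E7 : F * k2 = 0 := by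
    rw [hF, hk2, m2_mul, m2_zero]; congr 1 <;> noncomm_ring
  have E8 : k2 * F = 0 := by
    rw [hF, hk2, m2_mul, m2_zero]; congr 1 <;> noncomm_ring
  have E9 : k0 * k0 = 0 := by
    rw [hk0, m2_mul, m2_zero]; congr 1 <;> noncomm_ring
  have H0 : Hmg A 1 0 (PowerSeries.C X0) := by
    refine Hmg.C _ fun i j => ?_
    rcases z01 i with rfl | rfl <;> rcases z01 j with rfl | rfl <;>
      simp [hX0, m2, hx.1, hy.1, show (1 : ZMod 2) + 1 = 0 from rfl]
  have H1 : Hmg A 0 1 (PowerSeries.C F) := by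
    refine Hmg.C _ fun i j => ?_
    rcases z01 i with rfl | rfl <;> rcases z01 j with rfl | rfl <;>
      simp [hF, m2, hf, show (1 : ZMod 2) + 1 = 0 from rfl]
  have H2 : Hmg A 0 1 (PowerSeries.C k0) := by
    refine Hmg.C _ fun i j => ?_
    rcases z01 i with rfl | rfl <;> rcases z01 j with rfl | rfl <;>
      simp [hk0, m2, hb, show (1 : ZMod 2) + 1 = 0 from rfl]
  have H3 : Hmg A (-1) 0 (PowerSeries.C k1) := by
    refine Hmg.C _ fun i j => ?_
    rcases z01 i with rfl | rfl <;> rcases z01 j with rfl | rfl <;>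
      simp [hk1, m2, hσ, hτ, show (1 : ZMod 2) + 1 = 0 from rfl]
  have H4 : Hmg A (-2) 1 (PowerSeries.C k2) := by
    refine Hmg.C _ fun i j => ?_
    rcases z01 i with rfl | rfl <;> rcases z01 j with rfl | rfl <;>
      simp [hk2, m2, hr, show (1 : ZMod 2) + 1 = 0 from rfl]
  have hX : ∀ a : SA A, a * PowerSeries.X = PowerSeries.X * a := fun a =>
    (PowerSeries.commute_X a).eq
  have hX' : ∀ a b : SA A, a * (PowerSeries.X * b) = PowerSeries.X * (a * b) := fun a b => by
    rw [← mul_assoc, hX, mul_assoc]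
  obtain ⟨T, hT1, hT2, hT3⟩ := series_exists (A := A)
    (Φ := PowerSeries.C X0 + PowerSeries.X * PowerSeries.C F)
    (κ := PowerSeries.C k0 + PowerSeries.X * (PowerSeries.C k1 + PowerSeries.X * PowerSeries.C k2))
    (H2.add (by simpa using Hmg.X.mul (H3.add (by simpa [show (1 : ZMod 2) + 1 = 0 from rfl] using Hmg.X.mul H4))))
    (by simp [E9])
    (by
      rw [map_add, Ds_X_mul, map_add, Ds_X_mul, Ds_C, Ds_C, Ds_C, E4, E5, E6]
      simp only [mul_add, add_mul, hX', mul_assoc, ← map_mul, E7, E8, map_zero, mul_zero,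
        map_neg, map_add, map_sub, map_one, mul_sub, mul_neg, mul_one]
      abel)
    (by
      rw [map_add, Ds_X_mul, Ds_C, Ds_C, E1, E2]
      simp only [mul_add, add_mul, hX', mul_assoc, ← map_mul, E3, map_zero, mul_zero,
        map_neg, map_add, mul_neg]
      abel)
    (H0.add (by simpa [show (1 : ZMod 2) + 1 = 0 from rfl] using Hmg.X.mul H1))
  exact ⟨T, hT1, by rw [hT2]; simp [hX0], hT3⟩

/-- sign correction -/
def eta (i : ZMod 2) (n : ℕ) : ℤ := if i = 0 then 1 else (-1) ^ (n + 1)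

lemma usgn (z : ℤ) (n : ℕ) (h : Even (z - n)) : (((-1 : ℤˣ) ^ z : ℤˣ) : ℤ) = (-1) ^ n := by
  have : z = n + (z - n) := by ring
  rw [this, zpow_add, Even.neg_one_zpow h]
  simp

lemma ncast (n : ℕ) : (Even n ∧ (n : ZMod 2) = 0) ∨ (Odd n ∧ (n : ZMod 2) = 1) := by
  rcases Nat.even_or_odd n with h | h
  · exact Or.inl ⟨h, (ZMod.natCast_eq_zero_iff_even).mpr h⟩
  · exact Or.inr ⟨h, (ZMod.natCast_eq_one_iff_odd).mpr h⟩

lemma eta_sq (i n) : eta i n * eta i n = 1 := by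
  unfold eta
  split_ifs
  · rfl
  · rw [← pow_add, Even.neg_one_pow ⟨_, rfl⟩]

lemma eta_1 (i : ZMod 2) (n : ℕ) : sg i * eta i (n + 1) = (-1) ^ (n + 1) * eta (i + 1) n := by
  rcases z01 i with rfl | rfl <;>
    simp [eta, sg, show (1 : ZMod 2) + 1 = 0 from rfl, pow_succ, ← mul_pow]

lemma eta_2 (i : ZMod 2) (n : ℕ) : sg i * eta i (n + 1) = eta i n := by
  rcases z01 i with rfl | rfl <;>
    simp [eta, sg, pow_succ]

lemma eta_3 (i : ZMod 2) (p q : ℕ) : sg i * eta i (p + q) =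
    (((-1 : ℤˣ) ^ ((p : ℤ) * (1 - (q : ℤ))) : ℤˣ) : ℤ) * (eta i p * eta (i + p) q) := by
  rw [usgn _ (p * (1 + q)) ⟨- (p * q), by push_cast; ring⟩]
  rcases z01 i with rfl | rfl <;> rcases ncast p with ⟨hp, hp'⟩ | ⟨hp, hp'⟩ <;>
    rcases ncast q with ⟨hq, hq'⟩ | ⟨hq, hq'⟩ <;>
    simp [eta, sg, hp', pow_add, pow_mul, hp.neg_one_pow, hq.neg_one_pow,
      show (1 : ZMod 2) + 1 = 0 from rfl]

lemma bwd_dir {x y : A.A} (hx : A.IsMC x) (hy : A.IsMC y) (H : A.HomotopyGaugeEquiv x y) :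
    MCStronglyHomotopic A x y := by
  obtain ⟨T, hT, hT0, hTe⟩ := T_exists hx hy H
  refine bwd_of_words A x y hx hy
    (fun n i => eta i n • (PowerSeries.coeff n T) i (i + n)) ?_ ?_ ?_ ?_
  · intro n i
    exact zsmul_mem (hT n i _).1 _
  · simp [hT0, eta, m2]
  · simp [hT0, eta, m2]
  · intro n i
    have h := congrArg (fun S : SA A => PowerSeries.coeff (n + 1) S i (i + (n + 1 : ℕ))) hTe
    simp only [map_add, PowerSeries.coeff_succ_X_mul, PowerSeries.coeff_C_mul,
      PowerSeries.coeff_mul_C, coeff_Ds, Matrix.add_apply, Dm_apply, map_zero,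
      Matrix.zero_apply] at h
    have hJ1 : ∀ (M : MA A) i j, ((Jm : MA A) * M : MA A) i j = M (i + 1) j := by
      intro M i j
      rw [Matrix.mul_apply, zsum]
      rcases z01 i with rfl | rfl <;> simp [Jm, m2, show (1 : ZMod 2) + 1 = 0 from rfl]
    have hJ2 : ∀ (M : MA A) i j, (M * (Jm : MA A) : MA A) i j = M i (j + 1) := by
      intro M i j
      rw [Matrix.mul_apply, zsum]
      rcases z01 j with rfl | rfl <;> simp [Jm, m2, show (1 : ZMod 2) + 1 = 0 from rfl]
    have hmul : PowerSeries.coeff (n + 1) (T * T) i (i + (n + 1 : ℕ)) =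
        ∑ p : Fin (n + 2), PowerSeries.coeff (p : ℕ) T i (i + ((p : ℕ) : ZMod 2)) *
          PowerSeries.coeff (n + 1 - p) T (i + ((p : ℕ) : ZMod 2)) (i + (n + 1 : ℕ)) := by
      rw [PowerSeries.coeff_mul, Finset.Nat.sum_antidiagonal_eq_sum_range_succ_mk,
        Finset.sum_range, Matrix.sum_apply]
      refine Finset.sum_congr rfl fun p _ => ?_
      rw [Matrix.mul_apply]
      refine Finset.sum_eq_single _ (fun l _ hl => ?_) (by simp)
      rw [(hT p i l).2, zero_mul]
      intro h0
      apply hl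
      exact (show ∀ i l c : ZMod 2, i + l + c = 0 → l = i + c by decide) _ _ _ h0
    rw [hmul, hJ1, hJ2] at h
    have h2 := congrArg (fun a => (sg i * eta i (n + 1)) • a) h
    simp only [smul_add, smul_zero, Finset.smul_sum] at h2
    rw [← h2]
    rw [usgn _ (n + 1) ⟨0, by push_cast; ring⟩]
    have i1 : i + 1 + (n : ZMod 2) = i + (n + 1 : ℕ) := by push_cast; ring
    have i2 : i + ((n + 1 : ℕ) : ZMod 2) + 1 = i + n := by
      have : (1 : ZMod 2) + 1 = 0 := rfl
      push_cast; linear_combination this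
    rw [i2]
    have t1 : A.d (eta i (n + 1) • PowerSeries.coeff (n + 1) T i (i + (n + 1 : ℕ))) =
        (sg i * eta i (n + 1)) • sg i • A.d (PowerSeries.coeff (n + 1) T i (i + (n + 1 : ℕ))) := by
      rw [map_zsmul, smul_smul]
      congr 1
      linear_combination - eta i (n + 1) * sg_sq i
    have t2 : (-1 : ℤ) ^ (n + 1) • (eta (i + 1) n • PowerSeries.coeff n T (i + 1) (i + 1 + n)
          + (((-1 : ℤˣ) ^ (n + 1) : ℤˣ) : ℤ) • (eta i n • PowerSeries.coeff n T i (i + n))) =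
        (sg i * eta i (n + 1)) • PowerSeries.coeff n T (i + 1) (i + (n + 1 : ℕ)) +
        (sg i * eta i (n + 1)) • PowerSeries.coeff n T i (i + n) := by
      rw [smul_add, smul_smul, smul_smul, smul_smul, i1, ← eta_1]
      congr 2
      rw [eta_2]
      push_cast
      rw [← pow_add, Even.neg_one_pow ⟨_, rfl⟩, one_mul]
    have t3 : ∀ p : Fin (n + 2),
        (((-1 : ℤˣ) ^ (((p : ℕ) : ℤ) * (1 - ((n : ℤ) + 1 - ((p : ℕ) : ℤ)))) : ℤˣ) : ℤ) •
          ((eta i p • PowerSeries.coeff (p : ℕ) T i (i + (p : ℕ))) *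
            (eta (i + (p : ℕ)) (n + 1 - p) • PowerSeries.coeff (n + 1 - p) T (i + (p : ℕ))
              (i + (p : ℕ) + (n + 1 - p : ℕ)))) =
        (sg i * eta i (n + 1)) • (PowerSeries.coeff (p : ℕ) T i (i + ((p : ℕ) : ZMod 2)) *
          PowerSeries.coeff (n + 1 - p) T (i + ((p : ℕ) : ZMod 2)) (i + (n + 1 : ℕ))) := by
      intro p
      obtain ⟨q, hq⟩ : ∃ q, q = n + 1 - (p : ℕ) := ⟨_, rfl⟩
      have hpq : n + 1 = p + q := by omega
      have hz : (n : ℤ) + 1 - ((p : ℕ) : ℤ) = q := by omega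
      have hc : i + ((p : ℕ) : ZMod 2) + (q : ZMod 2) = i + ((n + 1 : ℕ) : ZMod 2) := by
        rw [hpq, Nat.cast_add, add_assoc]
      have he := eta_3 i p q
      rw [← hpq] at he
      rw [hz, ← hq, he, smul_mul_smul_comm, smul_smul, hc]
    simp only [t1, t2, t3]
    abel

end Final

/-- **Theorem (algebraic Schlessinger-Stasheff).** Let `A` be any dg algebra over a
commutative ring `k`.  Two Maurer-Cartan elements of `A` are strongly homotopic
(`I`-homotopic, where `I` is the singular simplicial set of `[0,1]`) if and only if
they are homotopy gauge equivalent. -/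
theorem mc_strongly_homotopic_iff_homotopy_gauge_equivalent
    {k : Type} [CommRing k] (A : DGA k) (x₀ x₁ : A.A)
    (hx₀ : A.IsMC x₀) (hx₁ : A.IsMC x₁) :
    MCStronglyHomotopic A x₀ x₁ ↔ A.HomotopyGaugeEquiv x₀ x₁ := by
  exact ⟨fwd_dir A x₀ x₁, bwd_dir hx₀ hx₁⟩
end

section
/- Let A be a dg algebra. Any cohesive A-module is a retract (in the dg category of dg A-modules) of a free cohesive A-module, i.e. one of the form F′ ⊗_{A⁰} A with F′ a bounded graded A⁰-module, free of finite rank in every degree. -/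
open DirectSum

/-! ## dg modules over a dg algebra, cohesive modules -/

/-- A (right) dg module over a dg algebra `A`: a graded `k`-module with a right
`A`-action and a square-zero degree-one differential satisfying the graded Leibniz
rule. -/
structure DGMod (k : Type) [CommRing k] (A : DGA k) : Type 1 where
  M : Type
  [addM : AddCommGroup M]
  [modM : Module k M]
  grM : ℤ → Submodule k M
  act : M → A.A → M
  act_addl : ∀ m m' a, act (m + m') a = act m a + act m' a
  act_addr : ∀ m a a', act m (a + a') = act m a + act m a'
  act_smul : ∀ (c : k) m a, act (c • m) a = c • act m a
  act_smul' : ∀ (c : k) m a, act m (c • a) = c • act m a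
  act_one : ∀ m, act m 1 = m
  act_mul : ∀ m a b, act (act m a) b = act m (a * b)
  act_gr : ∀ (i j : ℤ), ∀ m ∈ grM i, ∀ a ∈ A.gr j, act m a ∈ grM (i + j)
  dM : M → M
  dM_add : ∀ m m', dM (m + m') = dM m + dM m'
  dM_smul : ∀ (c : k) m, dM (c • m) = c • dM m
  dM_sq : ∀ m, dM (dM m) = 0
  dM_gr : ∀ (i : ℤ), ∀ m ∈ grM i, dM m ∈ grM (i + 1)
  leibnizM : ∀ (i : ℤ), ∀ m ∈ grM i, ∀ a,
    dM (act m a) = act (dM m) a + (((-1 : ℤˣ) ^ i : ℤˣ) : ℤ) • act m (A.d a)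

attribute [instance] DGMod.addM DGMod.modM

namespace DGMod

variable {k : Type} [CommRing k] {A : DGA k}

/-- A morphism of dg `A`-modules (closed, of degree zero). -/
def IsHom (M N : DGMod k A) (f : M.M → N.M) : Prop :=
  (∀ m m', f (m + m') = f m + f m') ∧ (∀ (c : k) m, f (c • m) = c • f m) ∧
  (∀ m a, f (M.act m a) = N.act (f m) a) ∧
  (∀ (i : ℤ), ∀ m ∈ M.grM i, f m ∈ N.grM i) ∧
  (∀ m, f (M.dM m) = N.dM (f m))

/-- An `A`-linear graded map of degree `r` (not necessarily closed). -/
def IsGradedMap (M N : DGMod k A) (r : ℤ) (h : M.M → N.M) : Prop :=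
  (∀ m m', h (m + m') = h m + h m') ∧ (∀ (c : k) m, h (c • m) = c • h m) ∧
  (∀ m a, h (M.act m a) = N.act (h m) a) ∧
  (∀ (i : ℤ), ∀ m ∈ M.grM i, h m ∈ N.grM (i + r))

/-- Two maps of dg `A`-modules are (chain) homotopic. -/
def Homotopic (M N : DGMod k A) (f g : M.M → N.M) : Prop :=
  ∃ h : M.M → N.M, IsGradedMap M N (-1) h ∧ ∀ m, f m - g m = N.dM (h m) + h (M.dM m)

/-- A dg `A`-module is free cohesive if its underlying graded module is free on finitely
many homogeneous generators (i.e. of the form `F' ⊗_{A⁰} A` with `F'` a bounded graded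
`A⁰`-module, free of finite rank in every degree). -/
def IsFreeCohesive (M : DGMod k A) : Prop :=
  ∃ (n : ℕ) (dv : Fin n → ℤ) (bas : Fin n → M.M),
    (∀ i, bas i ∈ M.grM (dv i)) ∧
    (∀ m : M.M, ∃! c : Fin n → A.A, m = ∑ i, M.act (bas i) (c i))

/-- A dg `A`-module `M` is cohesive: its underlying graded module `M^#` is isomorphic to
`E ⊗_{A⁰} A^#` for a graded right `A⁰`-module `E` which is finitely generated projective
in every degree and bounded.  Equivalently (as encoded here), `M^#` is the image of a
degree-preserving idempotent matrix `e` with entries in `A⁰` acting on a finitely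
generated free graded `A^#`-module, via a splitting `(p, ι)` of graded `A^#`-module
maps. -/
def IsCohesive (M : DGMod k A) : Prop :=
  ∃ (n : ℕ) (dv : Fin n → ℤ) (e : Fin n → Fin n → A.A)
    (p : M.M → (Fin n → A.A)) (ι : (Fin n → A.A) → M.M),
    (∀ i j, e i j ∈ A.gr 0) ∧ (∀ i j, dv i ≠ dv j → e i j = 0) ∧
    (∀ i j, ∑ l, e i l * e l j = e i j) ∧
    (∀ m m' i, p (m + m') i = p m i + p m' i) ∧
    (∀ m a i, p (M.act m a) i = p m i * a) ∧
    (∀ (g : ℤ), ∀ m ∈ M.grM g, ∀ i, p m i ∈ A.gr (g - dv i)) ∧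
    (∀ v v', ι (v + v') = ι v + ι v') ∧
    (∀ v a, ι (fun i => v i * a) = M.act (ι v) a) ∧
    (∀ (g : ℤ) (v : Fin n → A.A), (∀ i, v i ∈ A.gr (g - dv i)) → ι v ∈ M.grM g) ∧
    (∀ m, ι (p m) = m) ∧
    (∀ v i, p (ι v) i = ∑ l, e i l * v l)

end DGMod

namespace DGMod

variable {k : Type} [CommRing k] {A : DGA k}

/-- Degree `g` part of the free graded module on generators of degrees `dv`. -/
def freeGr (A : DGA k) {n : ℕ} (dv : Fin n → ℤ) (g : ℤ) : Submodule k (Fin n → A.A) where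
  carrier := {v | ∀ i, v i ∈ A.gr (g - dv i)}
  add_mem' := fun hv hw i => (A.gr _).add_mem (hv i) (hw i)
  zero_mem' := fun i => (A.gr _).zero_mem
  smul_mem' := fun c _ hv i => (A.gr _).smul_mem c (hv i)

/-- Right multiplication on the free module. -/
def rmul {n : ℕ} (v : Fin n → A.A) (a : A.A) : Fin n → A.A := fun i => v i * a

lemma rmul_addl {n : ℕ} (v w : Fin n → A.A) (a : A.A) :
    rmul (v + w) a = rmul v a + rmul w a := by
  funext i; simp [rmul, add_mul]

lemma rmul_subl {n : ℕ} (v w : Fin n → A.A) (a : A.A) :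
    rmul (v - w) a = rmul v a - rmul w a := by
  funext i; simp [rmul, sub_mul]

lemma rmul_negl {n : ℕ} (v : Fin n → A.A) (a : A.A) :
    rmul (-v) a = - rmul v a := by
  funext i; simp [rmul]

lemma rmul_zero {n : ℕ} (a : A.A) :
    rmul (0 : Fin n → A.A) a = 0 := by
  funext i; simp [rmul]

lemma freeGr_rmul {n : ℕ} (dv : Fin n → ℤ) (i j : ℤ) (v : Fin n → A.A)
    (hv : v ∈ freeGr A dv i) (a : A.A) (ha : a ∈ A.gr j) : rmul v a ∈ freeGr A dv (i + j) := by
  intro l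
  have h := SetLike.mul_mem_graded (hv l) ha
  have e : i - dv l + j = i + j - dv l := by ring
  rw [e] at h
  exact h

/-- The coordinatewise differential on the free module. -/
def freeD (A : DGA k) {n : ℕ} (dv : Fin n → ℤ) : (Fin n → A.A) →ₗ[k] (Fin n → A.A) where
  toFun v i := (((-1 : ℤˣ) ^ (dv i) : ℤˣ) : ℤ) • A.d (v i)
  map_add' v w := by funext i; simp
  map_smul' c v := by funext i; simp [smul_comm]

lemma freeD_gr {n : ℕ} (dv : Fin n → ℤ) (g : ℤ) (v : Fin n → A.A)
    (hv : v ∈ freeGr A dv g) : freeD A dv v ∈ freeGr A dv (g + 1) := by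
  intro i
  have h := A.d_mem _ _ (hv i)
  have e : g - dv i + 1 = g + 1 - dv i := by ring
  rw [e] at h
  exact zsmul_mem h _

lemma sign_sub (g r : ℤ) : (((-1 : ℤˣ) ^ r : ℤˣ) : ℤ) * (((-1 : ℤˣ) ^ (g - r) : ℤˣ) : ℤ)
    = (((-1 : ℤˣ) ^ g : ℤˣ) : ℤ) := by
  rw [← Units.val_mul, ← zpow_add]
  congr 2; ring

lemma sign_succ (g : ℤ) : (((-1 : ℤˣ) ^ (g + 1) : ℤˣ) : ℤ)
    = - (((-1 : ℤˣ) ^ g : ℤˣ) : ℤ) := by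
  rw [zpow_add]; simp

lemma freeD_leib {n : ℕ} (dv : Fin n → ℤ) (g : ℤ) (v : Fin n → A.A)
    (hv : v ∈ freeGr A dv g) (a : A.A) :
    freeD A dv (rmul v a) = rmul (freeD A dv v) a
      + (((-1 : ℤˣ) ^ g : ℤˣ) : ℤ) • rmul v (A.d a) := by
  funext i
  have h := A.leibniz _ _ (hv i) a
  simp only [freeD, rmul, LinearMap.coe_mk, AddHom.coe_mk, Pi.add_apply, Pi.smul_apply]
  rw [h, smul_add, smul_smul, sign_sub, smul_mul_assoc]

/-- The dg module `F ⊕ F[1]` with differential `(v, w) ↦ (T v + (w - π w), - T² v - T w)`. -/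
def doubled {n : ℕ} (dv : Fin n → ℤ) (T π : (Fin n → A.A) →ₗ[k] (Fin n → A.A))
    (hTgr : ∀ g, ∀ v ∈ freeGr A dv g, T v ∈ freeGr A dv (g + 1))
    (hTl : ∀ g, ∀ v ∈ freeGr A dv g, ∀ a, T (rmul v a) = rmul (T v) a
      + (((-1 : ℤˣ) ^ g : ℤˣ) : ℤ) • rmul v (A.d a))
    (hπgr : ∀ g, ∀ v ∈ freeGr A dv g, π v ∈ freeGr A dv g)
    (hπl : ∀ v a, π (rmul v a) = rmul (π v) a)
    (hTπ : ∀ v, T (π v) = π (T v))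
    (hTT : ∀ v, π (T (T v)) = 0) : DGMod k A where
  M := (Fin n → A.A) × (Fin n → A.A)
  grM g := (freeGr A dv g).prod (freeGr A dv (g + 1))
  act x a := (rmul x.1 a, rmul x.2 a)
  act_addl x y a := by simp [rmul_addl]
  act_addr x a b := by ext i <;> simp [rmul, mul_add]
  act_smul c x a := by ext i <;> simp [rmul]
  act_smul' c x a := by ext i <;> simp [rmul]
  act_one x := by ext i <;> simp [rmul]
  act_mul x a b := by ext i <;> simp [rmul, mul_assoc]
  act_gr i j x hx a ha := by
    refine ⟨freeGr_rmul dv i j _ hx.1 a ha, ?_⟩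
    have h := freeGr_rmul dv _ j _ hx.2 a ha
    rwa [add_right_comm] at h
  dM x := (T x.1 + (x.2 - π x.2), - T (T x.1) - T x.2)
  dM_add x y := by
    ext1
    · simp only [Prod.fst_add, Prod.snd_add, map_add]; abel
    · simp only [Prod.fst_add, Prod.snd_add, map_add]; abel
  dM_smul c x := by
    ext1
    · simp only [Prod.smul_fst, Prod.smul_snd, map_smul, smul_add, smul_sub]
    · simp only [Prod.smul_fst, Prod.smul_snd, map_smul, smul_sub, smul_neg]
  dM_sq x := by
    ext1
    · simp only [map_add, map_sub, map_neg, hTπ, hTT, Prod.fst_zero]; abel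
    · simp only [map_add, map_sub, map_neg, hTπ, hTT, Prod.snd_zero]; abel
  dM_gr i x hx := by
    refine ⟨add_mem (hTgr _ _ hx.1) (sub_mem hx.2 (hπgr _ _ hx.2)), ?_⟩
    exact sub_mem (neg_mem (hTgr _ _ (hTgr _ _ hx.1))) (hTgr _ _ hx.2)
  leibnizM i x hx a := by
    have h1 := hTl _ _ hx.1 a
    have h2 := hTl _ _ (hTgr _ _ hx.1) a
    have h3 := hTl _ _ hx.2 a
    have h4 := hTl _ _ hx.1 (A.d a)
    have h5 : rmul x.1 (A.d (A.d a)) = 0 := by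
      funext i; simp [rmul, A.d_sq]
    rw [sign_succ] at h2 h3
    ext1
    · simp only [h1, hπl, rmul_addl, rmul_subl, Prod.fst_add, Prod.smul_fst]; abel
    · simp only [h1, h2, h3, h4, h5, map_add, map_zsmul, rmul_addl, rmul_subl, rmul_negl,
        Prod.snd_add, Prod.smul_snd, smul_zero, neg_smul, smul_add]; abel

end DGMod

/-- **Theorem.** Let `A` be a dg algebra.  Any cohesive `A`-module is a retract (in the
dg category of dg `A`-modules) of a free cohesive `A`-module, i.e. one of the form
`F' ⊗_{A⁰} A` with `F'` a bounded graded `A⁰`-module, free of finite rank in every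
degree. -/
theorem cohesive_module_is_retract_of_free_cohesive
    {k : Type} [CommRing k] (A : DGA k) (M : DGMod k A) (hM : DGMod.IsCohesive M) :
    ∃ N : DGMod k A, DGMod.IsFreeCohesive N ∧
      ∃ (f : M.M → N.M) (g : N.M → M.M),
        DGMod.IsHom M N f ∧ DGMod.IsHom N M g ∧ ∀ m, g (f m) = m := by
  obtain ⟨n, dv, e, p0, ι0, -, -, -, hpa, hpact, hpgr, hιa, hιact, hιgr, hιp, -⟩ := hM
  have hact : ∀ (c : k) (m : M.M), M.act m (algebraMap k A.A c) = c • m := by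
    intro c m
    rw [Algebra.algebraMap_eq_smul_one, M.act_smul', M.act_one]
  let p : M.M →ₗ[k] (Fin n → A.A) :=
    { toFun := p0
      map_add' := fun m m' => by funext i; exact hpa m m' i
      map_smul' := fun c m => by
        funext i
        rw [← hact, hpact, ← Algebra.commutes, ← Algebra.smul_def]; rfl }
  let ι : (Fin n → A.A) →ₗ[k] M.M :=
    { toFun := ι0
      map_add' := hιa
      map_smul' := fun c v => by
        have h := hιact v (algebraMap k A.A c)
        rw [hact] at h
        rw [RingHom.id_apply, ← h]
        congr 1
        funext i
        rw [← Algebra.commutes, ← Algebra.smul_def]; rfl }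
  let D : M.M →ₗ[k] M.M :=
    { toFun := M.dM, map_add' := M.dM_add, map_smul' := M.dM_smul }
  have hDD : ∀ m, D (D m) = 0 := M.dM_sq
  have hip : ∀ m, ι (p m) = m := hιp
  have hpr : ∀ m a, p (M.act m a) = DGMod.rmul (p m) a := fun m a => by
    funext i; exact hpact m a i
  have hir : ∀ v a, ι (DGMod.rmul v a) = M.act (ι v) a := hιact
  have hpg : ∀ g, ∀ m ∈ M.grM g, p m ∈ DGMod.freeGr A dv g := hpgr
  have hig : ∀ g, ∀ v ∈ DGMod.freeGr A dv g, ι v ∈ M.grM g := hιgr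
  clear_value p ι
  let π : (Fin n → A.A) →ₗ[k] (Fin n → A.A) := p ∘ₗ ι
  have hπ : ∀ v, π v = p (ι v) := fun _ => rfl
  let q : (Fin n → A.A) →ₗ[k] (Fin n → A.A) := LinearMap.id - π
  have hq : ∀ v, q v = v - p (ι v) := fun _ => rfl
  let T : (Fin n → A.A) →ₗ[k] (Fin n → A.A) := p ∘ₗ D ∘ₗ ι + q ∘ₗ DGMod.freeD A dv ∘ₗ q
  have hT : ∀ v, T v = p (D (ι v)) + q (DGMod.freeD A dv (q v)) := fun _ => rfl
  have hqp : ∀ m, q (p m) = 0 := fun m => by rw [hq, hip, sub_self]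
  have hiq : ∀ v, ι (q v) = 0 := fun v => by rw [hq, map_sub, hip, sub_self]
  have hTp : ∀ m, T (p m) = p (D m) := fun m => by
    rw [hT, hqp, hip]; simp
  have hiT : ∀ v, ι (T v) = D (ι v) := fun v => by
    rw [hT, map_add, hiq, hip, add_zero]
  have hqg : ∀ g, ∀ v ∈ DGMod.freeGr A dv g, q v ∈ DGMod.freeGr A dv g := fun g v hv => by
    rw [hq]; exact sub_mem hv (hpg _ _ (hig _ _ hv))
  have hqr : ∀ v a, q (DGMod.rmul v a) = DGMod.rmul (q v) a := fun v a => by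
    rw [hq, hq, hir, hpr, DGMod.rmul_subl]
  have hqq : ∀ v, q (q v) = q v := fun v => by
    rw [hq (q v), hiq, map_zero, sub_zero]
  have hDl : ∀ g, ∀ m ∈ M.grM g, ∀ a, D (M.act m a) = M.act (D m) a
      + (((-1 : ℤˣ) ^ g : ℤˣ) : ℤ) • M.act m (A.d a) := M.leibnizM
  have hDg : ∀ g, ∀ m ∈ M.grM g, D m ∈ M.grM (g + 1) := M.dM_gr
  have hDd : ∀ m, M.dM m = D m := fun _ => rfl
  clear_value π q T D
  have h1 : ∀ g, ∀ v ∈ DGMod.freeGr A dv g, T v ∈ DGMod.freeGr A dv (g + 1) := fun g v hv => by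
    rw [hT]
    exact add_mem (hpg _ _ (hDg _ _ (hig _ _ hv)))
      (hqg _ _ (DGMod.freeD_gr dv _ _ (hqg _ _ hv)))
  have h2 : ∀ g, ∀ v ∈ DGMod.freeGr A dv g, ∀ a, T (DGMod.rmul v a) = DGMod.rmul (T v) a
      + (((-1 : ℤˣ) ^ g : ℤˣ) : ℤ) • DGMod.rmul v (A.d a) := fun g v hv a => by
    have hv' : DGMod.rmul v (A.d a) = p (ι (DGMod.rmul v (A.d a))) + q (DGMod.rmul v (A.d a)) := by
      rw [hq]; abel
    rw [hv', hT, hT, hir, hDl _ _ (hig _ _ hv), hqr, DGMod.freeD_leib dv _ _ (hqg _ _ hv),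
      DGMod.rmul_addl, map_add, map_add, map_zsmul, map_zsmul, hpr, hqr, hqr, hqq, hir, hqr,
      smul_add]
    abel
  let N : DGMod k A := DGMod.doubled dv T π h1 h2
    (fun g v hv => by rw [hπ]; exact hpg _ _ (hig _ _ hv))
    (fun v a => by rw [hπ, hπ, hir, hpr])
    (fun v => by rw [hπ, hπ, hTp, hiT])
    (fun v => by rw [hπ, hiT, hiT, hDD, map_zero])
  refine ⟨N, ?_, fun m => ((p m, 0) : (Fin n → A.A) × (Fin n → A.A)),
    fun x : (Fin n → A.A) × (Fin n → A.A) => ι x.1, ?_, ?_, hip⟩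
  · let bas : Fin (n + n) → (Fin n → A.A) × (Fin n → A.A) :=
      Fin.addCases (fun i => (Pi.single i 1, 0)) (fun i => (0, Pi.single i 1))
    have hsingle : ∀ g, ∀ i, g = dv i →
        (Pi.single i 1 : Fin n → A.A) ∈ DGMod.freeGr A dv g := by
      rintro g i rfl j
      by_cases h : j = i
      · subst h
        simp only [Pi.single_eq_same, sub_self]
        exact SetLike.one_mem_graded A.gr
      · rw [Pi.single_eq_of_ne h]; exact zero_mem _
    have hsum : ∀ c : Fin n → A.A, ∑ i, DGMod.rmul (Pi.single i (1 : A.A)) (c i) = c := by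
      intro c
      funext j
      simp [DGMod.rmul, Finset.sum_apply, Pi.single_apply]
    have key : ∀ c : Fin (n + n) → A.A,
        ∑ i, (((DGMod.rmul (bas i).1 (c i), DGMod.rmul (bas i).2 (c i))) :
          (Fin n → A.A) × (Fin n → A.A))
        = (fun i => c (Fin.castAdd n i), fun i => c (Fin.natAdd n i)) := by
      intro c
      rw [Fin.sum_univ_add]
      simp only [bas, Fin.addCases_left, Fin.addCases_right, DGMod.rmul_zero]
      ext1
      · simp only [Prod.fst_add, Prod.fst_sum, Finset.sum_const_zero, add_zero]
        exact hsum (fun i => c (Fin.castAdd n i))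
      · simp only [Prod.snd_add, Prod.snd_sum, Finset.sum_const_zero, zero_add]
        exact hsum (fun i => c (Fin.natAdd n i))
    refine ⟨n + n, Fin.addCases dv (fun i => dv i - 1), bas, ?_, ?_⟩
    · intro i
      refine Fin.addCases (fun i => ?_) (fun i => ?_) i
      · simp only [bas, Fin.addCases_left]
        exact ⟨hsingle _ _ rfl, zero_mem _⟩
      · simp only [bas, Fin.addCases_right]
        exact ⟨zero_mem _, hsingle _ _ (by ring)⟩
    · intro m
      refine ⟨Fin.addCases m.1 m.2, ?_, ?_⟩
      · refine Eq.trans ?_ (key _).symm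
        simp only [Fin.addCases_left, Fin.addCases_right]
        rfl
      · intro c hc
        have hc' := hc.trans (key c)
        subst hc'
        funext i
        refine Fin.addCases (fun i => ?_) (fun i => ?_) i
        · simp only [Fin.addCases_left]
        · simp only [Fin.addCases_right]
  · refine ⟨fun m m' => ?_, fun c m => ?_, fun m a => ?_, fun i m hm => ?_, fun m => ?_⟩
    · refine Prod.ext (map_add p m m') (add_zero _).symm
    · refine Prod.ext (map_smul p c m) (smul_zero _).symm
    · refine Prod.ext (hpr m a) (DGMod.rmul_zero _).symm
    · exact ⟨hpg _ _ hm, zero_mem _⟩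
    · refine Prod.ext ?_ ?_
      · change p (M.dM m) = T (p m) + (0 - π 0)
        rw [hTp, map_zero, hDd]; simp
      · change 0 = - T (T (p m)) - T 0
        rw [hTp, hTp, hDD]; simp
  · refine ⟨fun m m' => ?_, fun c m => ?_, fun m a => ?_, fun i m hm => ?_, fun m => ?_⟩
    · exact map_add ι _ _
    · exact map_smul ι _ _
    · exact hir _ _
    · exact hig _ _ hm.1
    · change ι (T m.1 + (m.2 - π m.2)) = M.dM (ι m.1)
      rw [map_add, hiT, map_sub, hπ, hip, hDd]; simp
end

section
/- Let A be a dg algebra concentrated in non-negative degrees that is flat as a module over its degree-zero part A⁰. Then every idempotent morphism in the homotopy category of cohesive A-modules splits. -/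
open DirectSum

/-- `A` is flat as a (right) module over its degree-zero part `A⁰`, expressed by the
equational criterion for flatness: every relation `Σ mᵢ rᵢ = 0` with `rᵢ ∈ A⁰` comes
from relations in `A⁰`. -/
def RightFlatOverDegreeZero {k : Type} [CommRing k] (A : DGA k) : Prop :=
  ∀ (n : ℕ) (m : Fin n → A.A) (r : Fin n → A.A), (∀ i, r i ∈ A.gr 0) →
    (∑ i, m i * r i = 0) →
    ∃ (l : ℕ) (w : Fin l → A.A) (a : Fin l → Fin n → A.A),
      (∀ j i, a j i ∈ A.gr 0) ∧
      (∀ i, m i = ∑ j, w j * a j i) ∧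
      (∀ j, ∑ i, a j i * r i = 0)

namespace CohSplit
open PowerSeries

structure Obs {R : Type*} [Ring R] (Deg : ℤ → AddSubgroup R) (d p h : R) : Prop where
  mul : ∀ {r s f g}, f ∈ Deg r → g ∈ Deg s → f * g ∈ Deg (r + s)
  even : ∀ {r f}, Even r → f ∈ Deg r → d * f - f * d ∈ Deg (r + 1)
  odd : ∀ {r f}, Odd r → f ∈ Deg r → d * f + f * d ∈ Deg (r + 1)
  dd : d * d = 0
  dp : d * p = p * d
  hp : p ∈ Deg 0
  hh : h ∈ Deg (-1)
  hq : d * h + h * d = p * p - p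

/-- coefficientwise degree, with the variable in degree 2 -/
def SDeg {R : Type*} [Ring R] (Deg : ℤ → AddSubgroup R) (r : ℤ) (S : R⟦X⟧) : Prop :=
  ∀ n : ℕ, coeff n S ∈ Deg (r - 2 * n)

section
variable {R : Type*} [Ring R] {Deg : ℤ → AddSubgroup R} {d p h : R}

lemma SDeg.add {r : ℤ} {S T : R⟦X⟧} (hS : SDeg Deg r S) (hT : SDeg Deg r T) : SDeg Deg r (S + T) :=
  fun n => by simpa using add_mem (hS n) (hT n)
lemma SDeg.sub {r : ℤ} {S T : R⟦X⟧} (hS : SDeg Deg r S) (hT : SDeg Deg r T) : SDeg Deg r (S - T) :=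
  fun n => by simpa using sub_mem (hS n) (hT n)
lemma SDeg.mul (H : Obs Deg d p h) {r s t : ℤ} {S T : R⟦X⟧} (hS : SDeg Deg r S)
    (hT : SDeg Deg s T) (ht : r + s = t) : SDeg Deg t (S * T) := by
  intro n
  rw [coeff_mul]
  refine sum_mem fun ij hij => ?_
  have := H.mul (hS ij.1) (hT ij.2)
  rw [Finset.HasAntidiagonal.mem_antidiagonal] at hij
  convert this using 2
  rw [← hij]; push_cast; rw [← ht]; ring
lemma SDeg.X_mul {r t : ℤ} {S : R⟦X⟧} (hS : SDeg Deg r S) (ht : r + 2 = t) : SDeg Deg t (X * S) := by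
  intro n
  rcases n with _ | n
  · simp
  · rw [coeff_succ_X_mul]
    convert hS n using 2
    push_cast; rw [← ht]; ring
lemma SDeg.mon {r : ℤ} {z : R} {n : ℕ} (hz : z ∈ Deg (r - 2 * n)) : SDeg Deg r (C z * X ^ n) := by
  intro m
  rw [coeff_C_mul_X_pow]
  split_ifs with hh
  · rw [hh]; exact hz
  · exact zero_mem _

structure St (Deg : ℤ → AddSubgroup R) (d p : R) (W P : R⟦X⟧) : Prop where
  W0 : coeff 0 W = 0
  P0 : coeff 0 P = p
  WD : SDeg Deg 1 W
  PD : SDeg Deg 0 P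

noncomputable def FF (d : R) (W P : R⟦X⟧) : R⟦X⟧ := (C d + W) * (C d + W) - X * (P * P - P)
noncomputable def GG (d : R) (W P : R⟦X⟧) : R⟦X⟧ := P * (C d + W) - (C d + W) * P

lemma FF_deg (H : Obs Deg d p h) {W P : R⟦X⟧} (hs : St Deg d p W P) : SDeg Deg 2 (FF d W P) := by
  have e : FF d W P = ((C d * W + W * C d) + W * W) - X * (P * P - P) := by
    have : (C d * C d : R⟦X⟧) = 0 := by rw [← map_mul, H.dd, map_zero]
    rw [FF]
    linear_combination (norm := noncomm_ring) this
  rw [e]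
  refine (SDeg.add ?_ (hs.WD.mul H hs.WD (by norm_num))).sub
    (SDeg.X_mul ((hs.PD.mul H hs.PD (by norm_num)).sub hs.PD) (by norm_num))
  intro n
  simp only [map_add, coeff_C_mul, coeff_mul_C]
  have := H.odd (r := 1 - 2 * n) ⟨-n, by ring⟩ (hs.WD n)
  convert this using 2; ring

lemma GG_deg (H : Obs Deg d p h) {W P : R⟦X⟧} (hs : St Deg d p W P) : SDeg Deg 1 (GG d W P) := by
  have e : GG d W P = (P * W - W * P) - (C d * P - P * C d) := by
    rw [GG]; noncomm_ring
  rw [e]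
  refine SDeg.sub ((hs.PD.mul H hs.WD (by norm_num)).sub (hs.WD.mul H hs.PD (by norm_num))) ?_
  intro n
  simp only [map_sub, coeff_C_mul, coeff_mul_C]
  have := H.even (r := 0 - 2 * n) ⟨-n, by ring⟩ (hs.PD n)
  convert this using 2; ring

lemma bianchi1 (d : R) (W P : R⟦X⟧) : (C d + W) * FF d W P - FF d W P * (C d + W)
    = X * (GG d W P * P + P * GG d W P - GG d W P) := by
  have hX : (C d + W) * X = X * (C d + W) := commute_X _ 
  have : FF d W P = (C d + W) * (C d + W) - X * (P * P - P) := rfl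
  rw [this, GG]
  generalize C d + W = V at *
  linear_combination (norm := noncomm_ring) -hX * (P * P - P)

lemma bianchi2 (d : R) (W P : R⟦X⟧) : GG d W P * (C d + W) + (C d + W) * GG d W P
    = P * FF d W P - FF d W P * P := by
  have hX : P * X = X * P := commute_X _ 
  rw [FF, GG]
  generalize C d + W = V at *
  linear_combination (norm := noncomm_ring) hX * (P * P - P)

/-- products of series vanishing to low order -/
lemma coeff_mul_low_left {S T : R⟦X⟧} {n : ℕ} (hS : ∀ i < n, coeff i S = 0) :
    coeff n (S * T) = coeff n S * coeff 0 T := by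
  rw [coeff_mul, Finset.sum_eq_single (n, 0)]
  · rintro ⟨i, j⟩ hij hne
    rw [Finset.HasAntidiagonal.mem_antidiagonal] at hij
    simp only at hij
    have : i < n := by
      rcases Nat.lt_or_ge i n with h | h
      · exact h
      · exfalso; apply hne; ext <;> simp <;> omega
    simp [hS i this]
  · intro h; simp at h

lemma coeff_mul_low_right {S T : R⟦X⟧} {n : ℕ} (hS : ∀ i < n, coeff i S = 0) :
    coeff n (T * S) = coeff 0 T * coeff n S := by
  rw [coeff_mul, Finset.sum_eq_single (0, n)]
  · rintro ⟨i, j⟩ hij hne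
    rw [Finset.HasAntidiagonal.mem_antidiagonal] at hij
    simp only at hij
    have : j < n := by
      rcases Nat.lt_or_ge j n with h | h
      · exact h
      · exfalso; apply hne; ext <;> simp <;> omega
    simp [hS j this]
  · intro h; simp at h


lemma pert {S T Z Y : R⟦X⟧} {n : ℕ} (hn : 1 ≤ n) (hZ : ∀ i < n, coeff i Z = 0)
    (hY : ∀ i < n, coeff i Y = 0) :
    (∀ i < n, coeff i ((S + Z) * (T + Y)) = coeff i (S * T)) ∧
    coeff n ((S + Z) * (T + Y)) =
      coeff n (S * T) + coeff n Z * coeff 0 T + coeff 0 S * coeff n Y := by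
  have e : (S + Z) * (T + Y) = S * T + Z * T + (S + Z) * Y := by noncomm_ring
  constructor
  · intro i hi
    rw [e, map_add, map_add, coeff_mul_low_left (fun j hj => hZ j (by omega)),
      coeff_mul_low_right (fun j hj => hY j (by omega)), hZ i hi, hY i hi]
    simp
  · rw [e, map_add, map_add, coeff_mul_low_left hZ, coeff_mul_low_right hY, map_add, hZ 0 (by omega),
      add_zero]

lemma mon_low (z : R) {n i : ℕ} (hi : i < n) : coeff i (C z * X ^ n) = 0 := by
  rw [coeff_C_mul_X_pow, if_neg (by omega)]

lemma mon_mid (z : R) {n : ℕ} : coeff n (C z * X ^ n) = z := by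
  rw [coeff_C_mul_X_pow, if_pos rfl]

lemma coeff0_V {W : R⟦X⟧} (hW : coeff 0 W = 0) : coeff 0 (C d + W) = d := by
  rw [map_add, hW]; simp

lemma step_odd (H : Obs Deg d p h) {W P : R⟦X⟧} (hs : St Deg d p W P) {n : ℕ} (hn : 1 ≤ n)
    (hF : ∀ i < n + 1, coeff i (FF d W P) = 0) (hG : ∀ i < n, coeff i (GG d W P) = 0) :
    ∃ W' P' : R⟦X⟧, St Deg d p W' P' ∧ (∀ i < n + 1, coeff i (FF d W' P') = 0) ∧
      (∀ i < n + 1, coeff i (GG d W' P') = 0) := by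
  obtain ⟨c, hc⟩ : ∃ c, c = coeff n (GG d W P) := ⟨_, rfl⟩
  obtain ⟨g, hg⟩ : ∃ g, g = coeff (n + 1) (FF d W P) := ⟨_, rfl⟩
  have hcD : c ∈ Deg (1 - 2 * n) := hc ▸ GG_deg H hs n
  have hgD : g ∈ Deg (-2 * n) := by
    have := FF_deg H hs (n + 1)
    rw [← hg] at this; convert this using 2; push_cast; ring
  have V0 : coeff 0 (C d + W) = d := coeff0_V hs.W0
  have b1 : d * g - g * d = c * p + p * c - c := by
    have := congrArg (coeff (n + 1)) (bianchi1 d W P)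
    rw [coeff_succ_X_mul, map_sub, map_sub, map_add, coeff_mul_low_left hF, coeff_mul_low_right hF,
      coeff_mul_low_left hG, coeff_mul_low_right hG, V0, hs.P0, ← hc, ← hg] at this
    exact this
  have b2 : c * d + d * c = 0 := by
    have := congrArg (coeff n) (bianchi2 d W P)
    rw [map_sub, map_add, coeff_mul_low_left hG, coeff_mul_low_right hG,
      coeff_mul_low_left (fun i hi => hF i (by omega)),
      coeff_mul_low_right (fun i hi => hF i (by omega)), V0, hF n (by omega), ← hc] at this
    simpa using this
  obtain ⟨z, hz⟩ : ∃ z, z = c * p - p * c := ⟨_, rfl⟩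
  obtain ⟨y, hy⟩ : ∃ y, y = -g - h * c + c * h - 2 * (-(p * g * p) + h * c * p - p * c * h) := ⟨_, rfl⟩
  have hq := H.hq
  have hdp := H.dp
  have hzd : d * z + z * d = 0 := by
    rw [hz]
    linear_combination (norm := noncomm_ring) b2 * p - p * b2 - hdp * c - c * hdp
  have key : c + (p * z - z * p) + (y * d - d * y) = 0 := by
    rw [hy, hz]
    linear_combination (norm := noncomm_ring) b1 + hq * c - h * b2 + c * hq - b2 * h
      - 2 * (p * g * hdp) - 2 * (hdp * g * p) - 2 * (p * b1 * p) + 2 * (h * c * hdp)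
      + 2 * (hq * c * p) - 2 * (h * b2 * p) + 2 * (p * c * hq) - 2 * (p * b2 * h) - 2 * (hdp * c * h)
  have hzD : z ∈ Deg (1 - 2 * n) := by
    rw [hz]
    refine sub_mem ?_ ?_
    · simpa using H.mul hcD H.hp
    · simpa using H.mul H.hp hcD
  have hyD : y ∈ Deg (0 - 2 * n) := by
    have e1 : h * c ∈ Deg (0 - 2 * n) := by
      convert H.mul H.hh hcD using 2; ring
    have e2 : c * h ∈ Deg (0 - 2 * n) := by
      convert H.mul hcD H.hh using 2; ring
    have e3 : p * g * p ∈ Deg (0 - 2 * n) := by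
      convert H.mul (H.mul H.hp hgD) H.hp using 2; ring
    have e4 : h * c * p ∈ Deg (0 - 2 * n) := by
      convert H.mul e1 H.hp using 2; ring
    have e5 : p * c * h ∈ Deg (0 - 2 * n) := by
      rw [mul_assoc]
      convert H.mul H.hp e2 using 2; ring
    have e6 : g ∈ Deg (0 - 2 * n) := by convert hgD using 2; ring
    rw [hy, two_mul (-(p * g * p) + h * c * p - p * c * h)]
    have := sub_mem (add_mem (neg_mem e3) e4) e5
    exact sub_mem (add_mem (sub_mem (neg_mem e6) e1) e2) (add_mem this this)
  have n0 : n ≠ 0 := by omega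
  have lz : ∀ i < n, coeff i (C z * X ^ n) = 0 := fun i hi => mon_low z hi
  have ly : ∀ i < n, coeff i (C y * X ^ n) = 0 := fun i hi => mon_low y hi
  have hs' : St Deg d p (W + C z * X ^ n) (P + C y * X ^ n) :=
    ⟨by rw [map_add, hs.W0, lz 0 (by omega), add_zero],
     by rw [map_add, hs.P0, ly 0 (by omega), add_zero],
     hs.WD.add (SDeg.mon hzD), hs.PD.add (SDeg.mon hyD)⟩
  refine ⟨_, _, hs', ?_, ?_⟩
  · intro i hi
    have h0 := hF i hi
    have pp := (pert (S := P) (T := P) hn ly ly)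
    have vv := (pert (S := C d + W) (T := C d + W) hn lz lz)
    have hX : coeff i (X * ((P + C y * X ^ n) * (P + C y * X ^ n) - (P + C y * X ^ n)))
        = coeff i (X * (P * P - P)) := by
      rcases i with _ | i
      · simp
      · rw [coeff_succ_X_mul, coeff_succ_X_mul, map_sub, map_sub, pp.1 i (by omega), map_add,
          ly i (by omega), add_zero]
    rw [FF, map_sub, ← add_assoc, hX]
    rw [FF, map_sub] at h0
    rcases Nat.lt_or_ge i n with h' | h'
    · rw [vv.1 i h', h0]
    · obtain rfl : i = n := by omega
      rw [vv.2, mon_mid, coeff0_V hs.W0]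
      linear_combination (norm := noncomm_ring) h0 + hzd
  · intro i hi
    have pv := (pert (S := P) (T := C d + W) hn ly lz)
    have vp := (pert (S := C d + W) (T := P) hn lz ly)
    rw [GG, map_sub, ← add_assoc]
    rcases Nat.lt_or_ge i n with h' | h'
    · have h0 := hG i h'
      rw [GG, map_sub] at h0
      rw [pv.1 i h', vp.1 i h', h0]
    · obtain rfl : i = n := by omega
      rw [GG, map_sub] at hc
      rw [pv.2, vp.2, mon_mid, mon_mid, coeff0_V hs.W0, hs.P0]
      linear_combination (norm := noncomm_ring) key - hc

lemma step_even (H : Obs Deg d p h) {W P : R⟦X⟧} (hs : St Deg d p W P) {n : ℕ} (hn : 1 ≤ n)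
    (hF : ∀ i < n + 1, coeff i (FF d W P) = 0) (hG : ∀ i < n + 1, coeff i (GG d W P) = 0) :
    ∃ W' P' : R⟦X⟧, St Deg d p W' P' ∧ (∀ i < n + 1 + 1, coeff i (FF d W' P') = 0) ∧
      (∀ i < n + 1, coeff i (GG d W' P') = 0) := by
  obtain ⟨c, hc⟩ : ∃ c, c = coeff (n + 1) (FF d W P) := ⟨_, rfl⟩
  obtain ⟨g, hg⟩ : ∃ g, g = coeff (n + 1) (GG d W P) := ⟨_, rfl⟩
  have hgD : g ∈ Deg (1 - 2 * (n + 1 : ℕ)) := hg ▸ GG_deg H hs (n + 1)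
  have hcD : c ∈ Deg (0 - 2 * n) := by
    have := FF_deg H hs (n + 1)
    rw [← hc] at this; convert this using 2; push_cast; ring
  have V0 : coeff 0 (C d + W) = d := coeff0_V hs.W0
  have b1 : d * c - c * d = 0 := by
    have := congrArg (coeff (n + 1)) (bianchi1 d W P)
    rw [coeff_succ_X_mul, map_sub, map_sub, map_add, coeff_mul_low_left hF, coeff_mul_low_right hF,
      coeff_mul_low_left (fun i hi => hG i (by omega)),
      coeff_mul_low_right (fun i hi => hG i (by omega)), V0, hG n (by omega), ← hc] at this
    simpa using this
  have b2 : g * d + d * g = p * c - c * p := by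
    have := congrArg (coeff (n + 1)) (bianchi2 d W P)
    rw [map_sub, map_add, coeff_mul_low_left hG, coeff_mul_low_right hG,
      coeff_mul_low_left hF, coeff_mul_low_right hF, V0, hs.P0, ← hc, ← hg] at this
    exact this
  obtain ⟨z, hz⟩ : ∃ z, z = 2 * (p * c) - c := ⟨_, rfl⟩
  obtain ⟨y, hy⟩ : ∃ y, y = 4 * (h * c) - (2 * (p * g) - g) := ⟨_, rfl⟩
  have hq := H.hq
  have hdp := H.dp
  have hzd : z * d - d * z = 0 := by
    rw [hz]
    linear_combination (norm := noncomm_ring) b1 - 2 * (hdp * c) - 2 * (p * b1)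
  have key : c + (d * y + y * d) - (p * z + z * p - z) = 0 := by
    rw [hy, hz]
    linear_combination (norm := noncomm_ring) b2 - 2 * (p * b2) - 2 * (hdp * g)
      + 4 * (hq * c) - 4 * (h * b1)
  have hzD : z ∈ Deg (0 - 2 * n) := by
    have e1 : p * c ∈ Deg (0 - 2 * n) := by
      convert H.mul H.hp hcD using 2; ring
    rw [hz, two_mul (p * c)]
    exact sub_mem (add_mem e1 e1) hcD
  have hyD : y ∈ Deg (1 - 2 * (n + 1 : ℕ)) := by
    have e1 : h * c ∈ Deg (1 - 2 * (n + 1 : ℕ)) := by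
      convert H.mul H.hh hcD using 2; push_cast; ring
    have e2 : p * g ∈ Deg (1 - 2 * (n + 1 : ℕ)) := by
      convert H.mul H.hp hgD using 2; ring
    have e3 : y = (h * c + h * c + h * c + h * c) - (p * g + p * g - g) := by
      rw [hy]; noncomm_ring
    rw [e3]
    exact sub_mem (add_mem (add_mem (add_mem e1 e1) e1) e1) (sub_mem (add_mem e2 e2) hgD)
  have lz : ∀ i < n, coeff i (C z * X ^ n) = 0 := fun i hi => mon_low z hi
  have ly : ∀ i < n + 1, coeff i (C y * X ^ (n + 1)) = 0 := fun i hi => mon_low y hi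
  have ly' : ∀ i < n, coeff i (C y * X ^ (n + 1)) = 0 := fun i hi => mon_low y (by omega)
  have hs' : St Deg d p (W + C y * X ^ (n + 1)) (P + C z * X ^ n) :=
    ⟨by rw [map_add, hs.W0, ly 0 (by omega), add_zero],
     by rw [map_add, hs.P0, lz 0 (by omega), add_zero],
     hs.WD.add (SDeg.mon hyD), hs.PD.add (SDeg.mon hzD)⟩
  refine ⟨_, _, hs', ?_, ?_⟩
  · intro i hi
    have pp := (pert (S := P) (T := P) hn lz lz)
    have vv := (pert (S := C d + W) (T := C d + W) (Nat.le_add_left 1 n) ly ly)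
    rw [FF, map_sub, ← add_assoc]
    rcases Nat.lt_or_ge i (n + 1) with h' | h'
    · have h0 := hF i h'
      have hX : coeff i (X * ((P + C z * X ^ n) * (P + C z * X ^ n) - (P + C z * X ^ n)))
          = coeff i (X * (P * P - P)) := by
        rcases i with _ | i
        · simp
        · rw [coeff_succ_X_mul, coeff_succ_X_mul, map_sub, map_sub, pp.1 i (by omega), map_add,
            lz i (by omega), add_zero]
      rw [FF, map_sub] at h0
      rw [vv.1 i h', hX, h0]
    · obtain rfl : i = n + 1 := by omega
      rw [FF, map_sub, coeff_succ_X_mul, map_sub] at hc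
      rw [vv.2, coeff_succ_X_mul, map_sub, pp.2, map_add (coeff n), mon_mid, mon_mid, coeff0_V hs.W0, hs.P0]
      linear_combination (norm := noncomm_ring) key - hc
  · intro i hi
    have pv := (pert (S := P) (T := C d + W) hn lz ly')
    have vp := (pert (S := C d + W) (T := P) hn ly' lz)
    have h0 := hG i hi
    rw [GG, map_sub] at h0
    rw [GG, map_sub, ← add_assoc]
    rcases Nat.lt_or_ge i n with h' | h'
    · rw [pv.1 i h', vp.1 i h', h0]
    · obtain rfl : i = n := by omega
      rw [pv.2, vp.2, mon_mid, ly i (by omega), coeff0_V hs.W0]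
      linear_combination (norm := noncomm_ring) h0 + hzd

lemma exists_state (H : Obs Deg d p h) (n : ℕ) : ∃ W P : R⟦X⟧, St Deg d p W P ∧
    (∀ i < n + 2, coeff i (FF d W P) = 0) ∧ (∀ i < n + 1, coeff i (GG d W P) = 0) := by
  induction n with
  | zero =>
    have l1 : ∀ i < 1, coeff i (C h * X ^ 1) = 0 := fun i hi => mon_low h hi
    have hs : St Deg d p (C h * X ^ 1) (C p) := by
      refine ⟨l1 0 (by omega), by simp, SDeg.mon (by simpa using H.hh), ?_⟩
      intro n
      rw [coeff_C]
      split_ifs with hh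
      · rw [hh]; simpa using H.hp
      · exact zero_mem _
    refine ⟨_, _, hs, ?_, ?_⟩
    · intro i hi
      have vv := (pert (S := C d) (T := C d) le_rfl l1 l1)
      rw [FF, map_sub, ← map_mul C p p, ← map_sub C]
      rcases Nat.lt_or_ge i 1 with h' | h'
      · rw [vv.1 i h', ← map_mul, H.dd]
        obtain rfl : i = 0 := by omega
        simp
      · obtain rfl : i = 1 := by omega
        rw [vv.2, mon_mid, ← map_mul, H.dd, coeff_succ_X_mul]
        have := H.hq
        simp
        linear_combination (norm := noncomm_ring) this
    · intro i hi
      obtain rfl : i = 0 := by omega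
      have := H.dp
      simp [GG, this]
  | succ n ih =>
    obtain ⟨W, P, hs, h1, h2⟩ := ih
    obtain ⟨W, P, hs, h1, h2⟩ := step_odd H hs (n := n + 1) (by omega) h1 h2
    obtain ⟨W, P, hs, h1, h2⟩ := step_even H hs (n := n + 1) (by omega) h1 h2
    exact ⟨W, P, hs, h1, h2⟩

lemma exists_coherent (H : Obs Deg d p h) (L : ℕ) (hL : ∀ r : ℤ, r < -L → ∀ f ∈ Deg r, f = 0) :
    ∃ W P : R⟦X⟧, St Deg d p W P ∧ FF d W P = 0 ∧ GG d W P = 0 := by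
  obtain ⟨W, P, hs, h1, h2⟩ := exists_state H (L + 2)
  refine ⟨W, P, hs, ?_, ?_⟩
  · ext i
    rcases Nat.lt_or_ge i (L + 2 + 2) with h' | h'
    · simpa using h1 i h'
    · simpa using hL _ (by omega) _ (FF_deg H hs i)
  · ext i
    rcases Nat.lt_or_ge i (L + 2 + 1) with h' | h'
    · simpa using h2 i h'
    · simpa using hL _ (by omega) _ (GG_deg H hs i)
end
end CohSplit

namespace CohSplit
section Mod
variable {k : Type} [CommRing k] {A : DGA k}

/-- right action as an additive map in the module variable -/
def actR (T : DGMod k A) (a : A.A) : T.M →+ T.M :=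
  AddMonoidHom.mk' (fun m => T.act m a) (fun m m' => T.act_addl m m' a)
/-- right action as an additive map in the algebra variable -/
def actL (T : DGMod k A) (m : T.M) : A.A →+ T.M :=
  AddMonoidHom.mk' (fun a => T.act m a) (fun a a' => T.act_addr m a a')
lemma zero_act (T : DGMod k A) (a : A.A) : T.act 0 a = 0 := (actR T a).map_zero
lemma act_zero (T : DGMod k A) (m : T.M) : T.act m 0 = 0 := (actL T m).map_zero
lemma sub_act (T : DGMod k A) (m m' : T.M) (a : A.A) : T.act (m - m') a = T.act m a - T.act m' a :=
  (actR T a).map_sub m m'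
lemma neg_act (T : DGMod k A) (m : T.M) (a : A.A) : T.act (-m) a = -T.act m a :=
  (actR T a).map_neg m
lemma act_sub (T : DGMod k A) (m : T.M) (a a' : A.A) : T.act m (a - a') = T.act m a - T.act m a' :=
  (actL T m).map_sub a a'
lemma zsmul_act (T : DGMod k A) (n : ℤ) (m : T.M) (a : A.A) : T.act (n • m) a = n • T.act m a :=
  map_zsmul (actR T a) n m
lemma smul_eq_act (T : DGMod k A) (c : k) (m : T.M) : c • m = T.act m (c • 1) := by
  rw [T.act_smul', T.act_one]
/-- the differential as a linear map -/
def dL (T : DGMod k A) : T.M →ₗ[k] T.M where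
  toFun := T.dM
  map_add' := T.dM_add
  map_smul' := T.dM_smul
lemma dM_sub (T : DGMod k A) (m m' : T.M) : T.dM (m - m') = T.dM m - T.dM m' := (dL T).map_sub m m'
lemma dM_zero (T : DGMod k A) : T.dM 0 = 0 := (dL T).map_zero

structure QC (T : DGMod k A) (J : Type) (deg : J → ℤ) where
  p : T.M →+ (J → A.A)
  ι : (J → A.A) →+ T.M
  p_act : ∀ m a j, p (T.act m a) j = p m j * a
  p_gr : ∀ (g : ℤ), ∀ m ∈ T.grM g, ∀ j, p m j ∈ A.gr (g - deg j)
  ι_act : ∀ v a, ι (fun j => v j * a) = T.act (ι v) a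
  ι_gr : ∀ (g : ℤ) (v : J → A.A), (∀ j, v j ∈ A.gr (g - deg j)) → ι v ∈ T.grM g
  ιp : ∀ m, ι (p m) = m
  loc : ∀ v j, (∀ j', deg j' = deg j → v j' = 0) → p (ι v) j = 0
  fin : ∀ c : ℤ, {j | deg j ≤ c}.Finite

namespace QC
variable {T : DGMod k A} {J : Type} {deg : J → ℤ} (Q : QC T J deg)

def Filt (c : ℤ) : AddSubgroup T.M where
  carrier := {x | ∀ j, c < deg j → Q.p x j = 0}
  zero_mem' := by intro j _; simp
  add_mem' := by
    intro a b ha hb j hj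
    simp [ha j hj, hb j hj]
  neg_mem' := by
    intro a ha j hj
    simp [ha j hj]

lemma mem_Filt {c : ℤ} {x : T.M} : x ∈ Q.Filt c ↔ ∀ j, c < deg j → Q.p x j = 0 := Iff.rfl

lemma mono {c c' : ℤ} (h : c ≤ c') {x : T.M} (hx : x ∈ Q.Filt c) : x ∈ Q.Filt c' :=
  fun j hj => hx j (by omega)

lemma act_mem {c : ℤ} {x : T.M} (hx : x ∈ Q.Filt c) (a : A.A) : T.act x a ∈ Q.Filt c :=
  fun j hj => by rw [Q.p_act, hx j hj, zero_mul]

lemma smul_mem {c : ℤ} {x : T.M} (hx : x ∈ Q.Filt c) (a : k) : a • x ∈ Q.Filt c := by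
  rw [smul_eq_act]; exact Q.act_mem hx _

lemma gr_mem (hnneg : ∀ i : ℤ, i < 0 → A.gr i = ⊥) {g : ℤ} {x : T.M} (hx : x ∈ T.grM g) :
    x ∈ Q.Filt g := by
  intro j hj
  have := Q.p_gr g x hx j
  rw [hnneg _ (by omega)] at this
  simpa using this

lemma gr_mem' (hnneg : ∀ i : ℤ, i < 0 → A.gr i = ⊥) {g c : ℤ} {x : T.M} (hx : x ∈ T.grM g)
    (h : g ≤ c) : x ∈ Q.Filt c := Q.mono h (Q.gr_mem hnneg hx)

open scoped Classical in
noncomputable def gen (j : J) : T.M := Q.ι (Pi.single j 1)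

lemma gen_gr (j : J) : Q.gen j ∈ T.grM (deg j) := by
  classical
  apply Q.ι_gr
  intro i
  by_cases h : i = j
  · subst h
    simp only [Pi.single_eq_same, sub_self]
    exact SetLike.GradedOne.one_mem
  · rw [Pi.single_eq_of_ne h]; exact zero_mem _

lemma expand {c : ℤ} {x : T.M} (hx : x ∈ Q.Filt c) :
    x = ∑ j ∈ (Q.fin c).toFinset, T.act (Q.gen j) (Q.p x j) := by
  classical
  conv_lhs => rw [← Q.ιp x]
  have : Q.p x = ∑ j ∈ (Q.fin c).toFinset, fun i => (Pi.single j 1 : J → A.A) i * Q.p x j := by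
    ext i
    rw [Finset.sum_apply]
    by_cases hi : deg i ≤ c
    · rw [Finset.sum_eq_single i]
      · simp
      · intro j _ hj
        rw [Pi.single_eq_of_ne hj.symm, zero_mul]
      · intro h; simp [hi] at h
    · rw [hx i (by omega), Finset.sum_eq_zero]
      intro j hj
      have : i ≠ j := by rintro rfl; simp at hj; omega
      rw [Pi.single_eq_of_ne this, zero_mul]
  rw [this, map_sum]
  refine Finset.sum_congr rfl fun j _ => ?_
  rw [Q.ι_act, gen, ← this]

lemma filt_ind {c : ℤ} {x : T.M} (hx : x ∈ Q.Filt c) (Pr : T.M → Prop) (h0 : Pr 0)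
    (hadd : ∀ a b, Pr a → Pr b → Pr (a + b))
    (hg : ∀ j a, deg j ≤ c → Pr (T.act (Q.gen j) a)) : Pr x := by
  rw [Q.expand hx]
  refine Finset.sum_induction _ Pr hadd h0 fun j hj => hg j _ (by simpa using hj)

lemma hom_ind {c : ℤ} {x : T.M} (hx : x ∈ Q.Filt c) (Pr : T.M → Prop) (h0 : Pr 0)
    (hadd : ∀ a b, Pr a → Pr b → Pr (a + b))
    (hg : ∀ i, ∀ m ∈ T.grM i, Pr m) : Pr x := by
  refine Q.filt_ind hx Pr h0 hadd fun j a _ => ?_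
  induction a using DirectSum.Decomposition.inductionOn A.gr with
  | zero => rw [act_zero]; exact h0
  | homogeneous m => exact hg _ _ (T.act_gr _ _ _ (Q.gen_gr j) _ m.2)
  | add m m' h1 h2 => rw [T.act_addr]; exact hadd _ _ h1 h2

lemma map_mem (hnneg : ∀ i : ℤ, i < 0 → A.gr i = ⊥) {T' : DGMod k A} {J' : Type} {deg' : J' → ℤ}
    (Q' : QC T' J' deg') {r c : ℤ} {f : T.M → T'.M} (hf : DGMod.IsGradedMap T T' r f) {x : T.M}
    (hx : x ∈ Q.Filt c) {c' : ℤ} (hc : c + r = c') : f x ∈ Q'.Filt c' := by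
  refine Q.filt_ind hx (fun x => f x ∈ Q'.Filt c') ?_ ?_ ?_
  · have : f 0 = 0 := by simpa using hf.1 0 0
    rw [this]; exact zero_mem _
  · intro a b ha hb
    rw [hf.1]; exact add_mem ha hb
  · intro j a hj
    rw [hf.2.2.1]
    exact Q'.act_mem (Q'.gr_mem' hnneg (hf.2.2.2 _ _ (Q.gen_gr j)) (by omega)) _

lemma d_mem (hnneg : ∀ i : ℤ, i < 0 → A.gr i = ⊥) {c : ℤ} {x : T.M}
    (hx : x ∈ Q.Filt c) {c' : ℤ} (hc : c + 1 = c') : T.dM x ∈ Q.Filt c' := by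
  refine Q.filt_ind hx (fun x => T.dM x ∈ Q.Filt c') ?_ ?_ ?_
  · rw [dM_zero]; exact zero_mem _
  · intro a b ha hb
    rw [T.dM_add]; exact add_mem ha hb
  · intro j a hj
    rw [T.leibnizM _ _ (Q.gen_gr j)]
    refine add_mem (Q.act_mem (Q.gr_mem' hnneg (T.dM_gr _ _ (Q.gen_gr j)) (by omega)) _)
      (zsmul_mem (Q.act_mem (Q.gr_mem' hnneg (Q.gen_gr j) (by omega)) _) _)

lemma d_act_mem (hnneg : ∀ i : ℤ, i < 0 → A.gr i = ⊥) {c : ℤ} {x : T.M}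
    (hx : x ∈ Q.Filt c) (b : A.A) : T.dM (T.act x b) - T.act (T.dM x) b ∈ Q.Filt c := by
  refine Q.filt_ind hx (fun x => T.dM (T.act x b) - T.act (T.dM x) b ∈ Q.Filt c) ?_ ?_ ?_
  · simp [dM_zero, zero_act]
  · intro x y hx hy
    convert add_mem hx hy using 1
    simp only [T.dM_add, T.act_addl]; abel
  · intro j a hj
    have hg : Q.gen j ∈ Q.Filt c := Q.gr_mem' hnneg (Q.gen_gr j) hj
    rw [T.act_mul, T.leibnizM _ _ (Q.gen_gr j), T.leibnizM _ _ (Q.gen_gr j), T.act_addl, T.act_mul,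
      zsmul_act, add_sub_add_left_eq_sub]
    exact sub_mem (zsmul_mem (Q.act_mem hg _) _) (zsmul_mem (Q.act_mem (Q.act_mem hg _) _) _)

open scoped Classical in
noncomputable def th (c : ℤ) : T.M →+ T.M :=
  AddMonoidHom.mk' (fun x => Q.ι (fun j => if deg j = c then Q.p x j else 0)) (by
    intro x y
    rw [← map_add]
    congr 1
    ext j
    simp only [map_add, Pi.add_apply]
    split_ifs <;> simp)

open scoped Classical in
lemma th_apply (c : ℤ) (x : T.M) :
    Q.th c x = Q.ι (fun j => if deg j = c then Q.p x j else 0) := rfl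

lemma th_act (c : ℤ) (x : T.M) (a : A.A) : Q.th c (T.act x a) = T.act (Q.th c x) a := by
  classical
  rw [th_apply, th_apply, ← Q.ι_act]
  congr 1; ext j
  split_ifs
  · rw [Q.p_act]
  · simp

lemma th_gr (c : ℤ) {g : ℤ} {x : T.M} (hx : x ∈ T.grM g) : Q.th c x ∈ T.grM g := by
  classical
  rw [th_apply]
  apply Q.ι_gr
  intro j
  split_ifs
  · exact Q.p_gr _ _ hx _
  · exact zero_mem _

lemma th_zero {c c' : ℤ} (h : c' < c) {x : T.M} (hx : x ∈ Q.Filt c') : Q.th c x = 0 := by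
  classical
  rw [th_apply, ← Q.ι.map_zero]
  congr 1; ext j
  split_ifs with hj
  · exact hx j (by omega)
  · rfl

lemma p_th {c : ℤ} (x : T.M) {j : J} (hj : deg j ≠ c) : Q.p (Q.th c x) j = 0 := by
  classical
  rw [th_apply]
  apply Q.loc
  intro j' h
  rw [if_neg (by omega)]

lemma sub_th_mem {c : ℤ} {x : T.M} (hx : x ∈ Q.Filt c) : x - Q.th c x ∈ Q.Filt (c - 1) := by
  classical
  have : x - Q.th c x = Q.ι (fun j => if deg j = c then 0 else Q.p x j) := by
    conv_lhs => rw [← Q.ιp x]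
    rw [th_apply, ← map_sub, Q.ιp]
    congr 1; ext j
    simp only [Pi.sub_apply]
    split_ifs <;> simp
  rw [this]
  intro j hj
  apply Q.loc
  intro j' hj'
  split_ifs with h
  · rfl
  · exact hx j' (by omega)

/-- the truncated sub dg module -/
def truncSub (c : ℤ) : Submodule k T.M where
  carrier := {x | x ∈ Q.Filt c ∧ T.dM x ∈ Q.Filt c}
  zero_mem' := by
    refine ⟨zero_mem _, ?_⟩
    rw [dM_zero]; exact zero_mem _
  add_mem' := by
    intro a b ha hb
    refine ⟨add_mem ha.1 hb.1, ?_⟩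
    rw [T.dM_add]; exact add_mem ha.2 hb.2
  smul_mem' := by
    intro a x hx
    refine ⟨Q.smul_mem hx.1 a, ?_⟩
    rw [T.dM_smul]; exact Q.smul_mem hx.2 a

lemma mem_truncSub {c : ℤ} {x : T.M} : x ∈ Q.truncSub c ↔ x ∈ Q.Filt c ∧ T.dM x ∈ Q.Filt c := Iff.rfl

def trunc (hnneg : ∀ i : ℤ, i < 0 → A.gr i = ⊥) (c : ℤ) : DGMod k A where
  M := Q.truncSub c
  grM i := (T.grM i).comap (Q.truncSub c).subtype
  act x a := ⟨T.act x a, Q.act_mem x.2.1 a, by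
    have := add_mem (Q.d_act_mem hnneg x.2.1 a) (Q.act_mem x.2.2 a)
    simpa using this⟩
  act_addl _ _ _ := Subtype.ext (T.act_addl _ _ _)
  act_addr _ _ _ := Subtype.ext (T.act_addr _ _ _)
  act_smul _ _ _ := Subtype.ext (T.act_smul _ _ _)
  act_smul' _ _ _ := Subtype.ext (T.act_smul' _ _ _)
  act_one _ := Subtype.ext (T.act_one _)
  act_mul _ _ _ := Subtype.ext (T.act_mul _ _ _)
  act_gr i j m hm a ha := T.act_gr i j m hm a ha
  dM x := ⟨T.dM x, x.2.2, by rw [T.dM_sq]; exact zero_mem _⟩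
  dM_add _ _ := Subtype.ext (T.dM_add _ _)
  dM_smul _ _ := Subtype.ext (T.dM_smul _ _)
  dM_sq _ := Subtype.ext (T.dM_sq _)
  dM_gr i m hm := T.dM_gr i m hm
  leibnizM i m hm a := Subtype.ext (T.leibnizM i m hm a)

end QC

lemma cohesive_of (N : DGMod k A) (J : Type) [Finite J] (deg : J → ℤ)
    (p : N.M → J → A.A) (ι : (J → A.A) → N.M)
    (p_add : ∀ m m', p (m + m') = p m + p m')
    (p_act : ∀ m a j, p (N.act m a) j = p m j * a)
    (p_gr : ∀ (g : ℤ), ∀ m ∈ N.grM g, ∀ j, p m j ∈ A.gr (g - deg j))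
    (ι_add : ∀ v v', ι (v + v') = ι v + ι v')
    (ι_act : ∀ v a, ι (fun j => v j * a) = N.act (ι v) a)
    (ι_gr : ∀ (g : ℤ) (v : J → A.A), (∀ j, v j ∈ A.gr (g - deg j)) → ι v ∈ N.grM g)
    (ιp : ∀ m, ι (p m) = m)
    (loc : ∀ j j' (v : J → A.A), deg j ≠ deg j' → (v j' = 1) → (∀ i, i ≠ j' → v i = 0) →
      p (ι v) j = 0) : DGMod.IsCohesive N := by
  classical
  obtain ⟨n, ⟨φ⟩⟩ := Finite.exists_equiv_fin J
  let S : Fin n → J → A.A := fun j => Pi.single (φ.symm j) 1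
  let e : Fin n → Fin n → A.A := fun i j => p (ι (S j)) (φ.symm i)
  have hpι : ∀ (v : Fin n → A.A) i,
      p (ι (fun j => v (φ j))) (φ.symm i) = ∑ l, e i l * v l := by
    intro v i
    have h1 : (fun j => v (φ j)) = ∑ l, fun j => S l j * v l := by
      ext j
      rw [Finset.sum_apply, Finset.sum_eq_single (φ j)]
      · simp [S]
      · intro b _ hb
        have : j ≠ φ.symm b := by rintro rfl; simp at hb
        simp [S, Pi.single_eq_of_ne this]
      · simp
    have h2 := map_sum (AddMonoidHom.mk' ι ι_add) (fun l => fun j => S l j * v l) Finset.univ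
    have h3 := map_sum (AddMonoidHom.mk' p p_add) (fun l => ι (fun j => S l j * v l)) Finset.univ
    simp only [AddMonoidHom.mk'_apply] at h2 h3
    rw [h1, h2, h3, Finset.sum_apply]
    refine Finset.sum_congr rfl fun l _ => ?_
    rw [ι_act, p_act]
  refine ⟨n, fun i => deg (φ.symm i), e, fun m i => p m (φ.symm i), fun v => ι (fun j => v (φ j)),
    ?_, ?_, ?_, ?_, ?_, ?_, ?_, ?_, ?_, ?_, ?_⟩
  · intro i j
    by_cases h : deg (φ.symm i) = deg (φ.symm j)
    · have := p_gr (deg (φ.symm j)) (ι (S j)) (ι_gr _ _ ?_) (φ.symm i)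
      · rw [h, sub_self] at this; exact this
      · intro l
        by_cases hl : l = φ.symm j
        · subst hl
          simp only [S, Pi.single_eq_same, sub_self]
          exact SetLike.GradedOne.one_mem
        · simp only [S, Pi.single_eq_of_ne hl]; exact zero_mem _
    · have : e i j = 0 := loc _ _ _ h (by simp [S]) (by intro l hl; simp [S, Pi.single_eq_of_ne hl])
      rw [this]; exact zero_mem _
  · intro i j h
    exact loc _ _ _ h (by simp [S]) (by intro l hl; simp [S, Pi.single_eq_of_ne hl])
  · intro i j
    rw [← hpι (fun l => e l j) i]
    simp only [e, Equiv.symm_apply_apply]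
    rw [show (fun j_1 => p (ι (S j)) j_1) = p (ι (S j)) from rfl, ιp]
  · intro m m' i; exact congrFun (p_add m m') _
  · intro m a i; exact p_act m a _
  · intro g m hm i; exact p_gr g m hm _
  · intro v v'; rw [← ι_add]; rfl
  · intro v a; rw [← ι_act]
  · intro g v hv
    apply ι_gr
    intro j
    simpa using hv (φ j)
  · intro m
    simp only [Equiv.symm_apply_apply]
    exact ιp m
  · exact hpι

namespace QC
variable {T : DGMod k A} {J : Type} {deg : J → ℤ} (Q : QC T J deg)

theorem trunc_cohesive (hnneg : ∀ i : ℤ, i < 0 → A.gr i = ⊥) (c : ℤ) (s : T.M → T.M)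
    (hs : DGMod.IsGradedMap T T (-1) s)
    (hφ : ∀ x, x - (T.dM (s x) + s (T.dM x)) ∈ Q.Filt (c - 1)) :
    DGMod.IsCohesive (Q.trunc hnneg c) := by
  classical
  have hfin : Finite {j // deg j ≤ c} := Q.fin c
  have s_mem : ∀ {x}, x ∈ Q.Filt c → s x ∈ Q.Filt (c - 1) := fun hx =>
    Q.map_mem hnneg Q hs hx (by ring)
  let ρ : T.M → T.M := fun x => x - Q.th c x + Q.th c (T.dM (s x))
  have ρ_add : ∀ x y, ρ (x + y) = ρ x + ρ y := by
    intro x y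
    simp only [ρ, hs.1, T.dM_add, map_add]; abel
  have ρ_act : ∀ x ∈ Q.Filt c, ∀ a, ρ (T.act x a) = T.act (ρ x) a := by
    intro x hx a
    have h1 : Q.th c (T.dM (T.act (s x) a) - T.act (T.dM (s x)) a) = 0 :=
      Q.th_zero (by omega) (Q.d_act_mem hnneg (s_mem hx) a)
    rw [map_sub, sub_eq_zero] at h1
    simp only [ρ, hs.2.2.1]
    rw [h1, T.act_addl, sub_act, Q.th_act, Q.th_act]
  have ρ_mem : ∀ x ∈ Q.Filt c, ρ x ∈ Q.truncSub c := by
    intro x hx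
    have h1 : x - Q.th c x ∈ Q.Filt (c - 1) := Q.sub_th_mem hx
    have h2 : T.dM (s x) ∈ Q.Filt c := Q.d_mem hnneg (s_mem hx) (by ring)
    have h3 := Q.sub_th_mem h2
    have e : ρ x = (x - Q.th c x) - (T.dM (s x) - Q.th c (T.dM (s x))) + T.dM (s x) := by
      simp only [ρ]; abel
    rw [e]
    refine ⟨add_mem (Q.mono (by omega) (sub_mem h1 h3)) h2, ?_⟩
    rw [T.dM_add, T.dM_sq, add_zero]
    exact Q.d_mem hnneg (sub_mem h1 h3) (by ring)
  have ρ_id : ∀ x ∈ Q.truncSub c, ρ x = x := by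
    intro x hx
    have h1 := Q.th_zero (c := c) (by omega) (hφ x)
    have h2 : Q.th c (s (T.dM x)) = 0 := Q.th_zero (by omega) (s_mem hx.2)
    rw [map_sub, map_add, h2, add_zero, sub_eq_zero] at h1
    simp only [ρ]
    rw [h1]; abel
  have ρ_gr : ∀ g, ∀ x ∈ T.grM g, ρ x ∈ T.grM g := by
    intro g x hx
    have h1 : T.dM (s x) ∈ T.grM g := by
      have := T.dM_gr _ _ (hs.2.2.2 g x hx)
      simpa using this
    exact add_mem (sub_mem hx (Q.th_gr c hx)) (Q.th_gr c h1)
  let ex : ({j // deg j ≤ c} → A.A) → J → A.A := fun y j => if h : deg j ≤ c then y ⟨j, h⟩ else 0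
  have ex_add : ∀ y y', ex (y + y') = ex y + ex y' := by
    intro y y'; ext j
    simp only [ex, Pi.add_apply]
    split_ifs <;> simp
  have κ_mem : ∀ y, Q.ι (ex y) ∈ Q.Filt c := by
    intro y j hj
    apply Q.loc
    intro j' hj'
    simp only [ex]
    rw [dif_neg (by omega)]
  refine cohesive_of (Q.trunc hnneg c) {j // deg j ≤ c} (fun j => deg j.1)
    (fun m j => Q.p m.1 j.1) (fun y => ⟨ρ (Q.ι (ex y)), ρ_mem _ (κ_mem y)⟩) ?_ ?_ ?_ ?_ ?_ ?_ ?_ ?_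
  · intro m m'
    ext j
    exact congrFun (Q.p.map_add m.1 m'.1) j.1
  · intro m a j
    exact Q.p_act m.1 a j.1
  · intro g m hm j
    exact Q.p_gr g m.1 hm j.1
  · intro v v'
    apply Subtype.ext
    show ρ (Q.ι (ex (v + v'))) = ρ (Q.ι (ex v)) + ρ (Q.ι (ex v'))
    rw [ex_add, map_add, ρ_add]
  · intro v a
    apply Subtype.ext
    show ρ (Q.ι (ex (fun j => v j * a))) = T.act (ρ (Q.ι (ex v))) a
    rw [← ρ_act _ (κ_mem v), ← Q.ι_act]
    congr 2
    ext j
    simp only [ex]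
    split_ifs <;> simp
  · intro g v hv
    show ρ (Q.ι (ex v)) ∈ T.grM g
    apply ρ_gr
    apply Q.ι_gr
    intro j
    simp only [ex]
    split_ifs with h
    · exact hv ⟨j, h⟩
    · exact zero_mem _
  · intro m
    apply Subtype.ext
    show ρ (Q.ι (ex (fun j => Q.p m.1 j.1))) = m.1
    have : ex (fun j => Q.p m.1 j.1) = Q.p m.1 := by
      ext j
      simp only [ex]
      split_ifs with h
      · rfl
      · exact (m.2.1 j (by omega)).symm
    rw [this, Q.ιp, ρ_id _ m.2]
  · rintro j j' v hne h1 h0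
    show Q.p (ρ (Q.ι (ex v))) j.1 = 0
    have hv : ex v = Pi.single j'.1 1 := by
      ext i
      simp only [ex]
      by_cases hi : i = j'.1
      · subst hi
        rw [dif_pos j'.2, Pi.single_eq_same]
        exact h1
      · rw [Pi.single_eq_of_ne hi]
        split_ifs with h
        · exact h0 _ (fun e => hi (congrArg Subtype.val e))
        · rfl
    have hg : Q.ι (ex v) = Q.gen j'.1 := by rw [hv, gen]
    have hp : Q.p (Q.gen j'.1) j.1 = 0 := by
      rw [← hg, hv]
      apply Q.loc
      intro i hi
      rw [Pi.single_eq_of_ne]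
      rintro rfl
      exact hne hi.symm
    rw [hg]
    by_cases hc : deg j'.1 = c
    · have hjc : deg j.1 ≠ c := fun h => hne (h.trans hc.symm)
      simp only [ρ]
      rw [map_add, map_sub, Pi.add_apply, Pi.sub_apply, hp, Q.p_th _ hjc, Q.p_th _ hjc]
      simp
    · have hm : Q.gen j'.1 ∈ Q.Filt (c - 1) :=
        Q.gr_mem' hnneg (Q.gen_gr _) (by have := j'.2; omega)
      have hm2 : T.dM (s (Q.gen j'.1)) ∈ Q.Filt (c - 1) :=
        Q.d_mem hnneg (Q.map_mem hnneg Q hs hm (c' := c - 2) (by ring)) (by ring)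
      simp only [ρ]
      rw [Q.th_zero (by omega) hm, Q.th_zero (by omega) hm2]
      simpa using hp
end QC
end Mod
end CohSplit

namespace CohSplit
section Ps
open PowerSeries
variable {k : Type} [CommRing k] {B : Type} [AddCommGroup B] [Module k B]

/-- power series of endomorphisms act on sequences -/
noncomputable def Ph : (Module.End k B)⟦X⟧ →+* Module.End k (ℕ → B) where
  toFun S :=
    { toFun := fun v n => ∑ ij ∈ Finset.HasAntidiagonal.antidiagonal n, (coeff ij.1 S) (v ij.2)
      map_add' := by
        intro v w; ext n
        simp [Finset.sum_add_distrib]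
      map_smul' := by
        intro c v; ext n
        simp [Finset.smul_sum] }
  map_one' := by
    ext1 v; funext n
    show ∑ ij ∈ Finset.HasAntidiagonal.antidiagonal n, (coeff ij.1 (1 : (Module.End k B)⟦X⟧)) (v ij.2) = v n
    rw [Finset.sum_eq_single (0, n)]
    · rw [PowerSeries.coeff_one, if_pos rfl]; rfl
    · rintro ⟨i, j⟩ hij hne
      have : i ≠ 0 := by
        rintro rfl
        rw [Finset.HasAntidiagonal.mem_antidiagonal] at hij
        apply hne; simpa using hij
      rw [PowerSeries.coeff_one, if_neg this]; rfl
    · intro h; exact absurd (by simp) h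
  map_mul' := by
    intro S T; ext1 v; funext n
    show ∑ ij ∈ Finset.HasAntidiagonal.antidiagonal n, (coeff ij.1 (S * T)) (v ij.2)
      = ∑ ij ∈ Finset.HasAntidiagonal.antidiagonal n, (coeff ij.1 S)
          (∑ ab ∈ Finset.HasAntidiagonal.antidiagonal ij.2, (coeff ab.1 T) (v ab.2))
    simp only [PowerSeries.coeff_mul, map_sum, LinearMap.sum_apply, Module.End.mul_apply]
    rw [Finset.sum_sigma', Finset.sum_sigma']
    refine Finset.sum_nbij' (fun x => ⟨(x.2.1, x.2.2 + x.1.2), (x.2.2, x.1.2)⟩)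
      (fun x => ⟨(x.1.1 + x.2.1, x.2.2), (x.1.1, x.2.1)⟩) ?_ ?_ ?_ ?_ ?_
    · rintro ⟨⟨a, b⟩, ⟨c, d⟩⟩ h
      simp at h ⊢; omega
    · rintro ⟨⟨a, b⟩, ⟨c, d⟩⟩ h
      simp at h ⊢; omega
    · rintro ⟨⟨a, b⟩, ⟨c, d⟩⟩ h
      simp at h ⊢; omega
    · rintro ⟨⟨a, b⟩, ⟨c, d⟩⟩ h
      simp at h ⊢; omega
    · rintro ⟨⟨a, b⟩, ⟨c, d⟩⟩ h
      rfl
  map_zero' := by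
    ext1 v; funext n
    show ∑ ij ∈ Finset.HasAntidiagonal.antidiagonal n, (coeff ij.1 (0 : (Module.End k B)⟦X⟧)) (v ij.2) = 0
    simp
  map_add' := by
    intro S T; ext1 v; funext n
    show ∑ ij ∈ Finset.HasAntidiagonal.antidiagonal n, (coeff ij.1 (S + T)) (v ij.2)
      = ∑ ij ∈ Finset.HasAntidiagonal.antidiagonal n, (coeff ij.1 S) (v ij.2) +
        ∑ ij ∈ Finset.HasAntidiagonal.antidiagonal n, (coeff ij.1 T) (v ij.2)
    simp [Finset.sum_add_distrib]

lemma Ph_apply (S : (Module.End k B)⟦X⟧) (v : ℕ → B) (n : ℕ) :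
    Ph S v n = ∑ ij ∈ Finset.HasAntidiagonal.antidiagonal n, (coeff ij.1 S) (v ij.2) := rfl

lemma Ph_C (d : Module.End k B) (v : ℕ → B) (n : ℕ) : Ph (C d) v n = d (v n) := by
  rw [Ph_apply, Finset.sum_eq_single (0, n)]
  · rw [PowerSeries.coeff_C, if_pos rfl]
  · rintro ⟨i, j⟩ hij hne
    have : i ≠ 0 := by
      rintro rfl
      rw [Finset.HasAntidiagonal.mem_antidiagonal] at hij
      apply hne; simpa using hij
    rw [PowerSeries.coeff_C, if_neg this]; rfl
  · intro h; exact absurd (by simp) h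

lemma Ph_X_zero (v : ℕ → B) : Ph (k := k) X v 0 = 0 := by
  rw [Ph_apply]; simp

lemma Ph_X_succ (v : ℕ → B) (n : ℕ) : Ph (k := k) X v (n + 1) = v n := by
  rw [Ph_apply, Finset.sum_eq_single (1, n)]
  · rw [PowerSeries.coeff_X, if_pos rfl]; rfl
  · rintro ⟨i, j⟩ hij hne
    have : i ≠ 1 := by
      rintro rfl
      rw [Finset.HasAntidiagonal.mem_antidiagonal] at hij
      apply hne
      simp only [Prod.mk.injEq, true_and]
      simp at hij; omega
    rw [PowerSeries.coeff_X, if_neg this]; rfl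
  · intro h; exact absurd (by simp; omega) h

lemma Ph_single (S : (Module.End k B)⟦X⟧) (m : B) (n : ℕ) :
    Ph S (Pi.single 0 m) n = coeff n S m := by
  rw [Ph_apply, Finset.sum_eq_single (n, 0)]
  · simp
  · rintro ⟨i, j⟩ hij hne
    have : j ≠ 0 := by
      rintro rfl
      rw [Finset.HasAntidiagonal.mem_antidiagonal] at hij
      apply hne; simpa using hij
    rw [Pi.single_eq_of_ne this, map_zero]
  · intro h; exact absurd (by simp) h

lemma Ph_zero (S : (Module.End k B)⟦X⟧) (v : ℕ → B) : Ph S v 0 = coeff 0 S (v 0) := by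
  rw [Ph_apply, Finset.Nat.antidiagonal_zero, Finset.sum_singleton]

/-- left shift -/
def sg (v : ℕ → B) : ℕ → B := fun n => v (n + 1)

lemma sg_X (v : ℕ → B) : sg (Ph (k := k) X v) = v := by
  funext n; exact Ph_X_succ v n
lemma sg_add (v w : ℕ → B) : sg (v + w) = sg v + sg w := rfl

lemma X_sg (v : ℕ → B) : Ph (k := k) X (sg v) + Pi.single 0 (v 0) = v := by
  funext n
  cases n with
  | zero => rw [Pi.add_apply, Ph_X_zero]; simp
  | succ n => rw [Pi.add_apply, Ph_X_succ]; simp [sg]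

lemma Ph_sg (S : (Module.End k B)⟦X⟧) (v : ℕ → B) :
    Ph S v = Ph (k := k) X (Ph S (sg v)) + Ph S (Pi.single 0 (v 0)) := by
  conv_lhs => rw [← X_sg (k := k) v]
  rw [map_add, ← Module.End.mul_apply, ← Module.End.mul_apply, ← map_mul, ← map_mul,
    (PowerSeries.commute_X S).eq]

lemma Ph_comm (S : (Module.End k B)⟦X⟧) (v : ℕ → B) : Ph S (Ph (k := k) X v) = Ph (k := k) X (Ph S v) := by
  rw [← Module.End.mul_apply, ← Module.End.mul_apply, ← map_mul, ← map_mul,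
    (PowerSeries.commute_X S).eq]
end Ps
end CohSplit

namespace CohSplit
section Tel
open PowerSeries
variable {k : Type} [CommRing k] {A : DGA k}

/-- coefficientwise graded of degree r, variable in degree 2 -/
def GrS (M : DGMod k A) (r : ℤ) (S : (Module.End k M.M)⟦X⟧) : Prop :=
  ∀ (n : ℕ) (i : ℤ), ∀ m ∈ M.grM i, coeff n S m ∈ M.grM (i + r - 2 * n)
/-- coefficientwise linear over the algebra -/
def LinS (M : DGMod k A) (S : (Module.End k M.M)⟦X⟧) : Prop :=
  ∀ (n : ℕ) m a, coeff n S (M.act m a) = M.act (coeff n S m) a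

lemma cast_gr {M : DGMod k A} {i j : ℤ} {m : M.M} (h : m ∈ M.grM i) (e : i = j) : m ∈ M.grM j :=
  e ▸ h

lemma act_sum (M : DGMod k A) {I : Type} (s : Finset I) (f : I → M.M) (a : A.A) :
    M.act (∑ i ∈ s, f i) a = ∑ i ∈ s, M.act (f i) a := map_sum (actR M a) f s

lemma Ph_gr {M : DGMod k A} {r i i' : ℤ} {S : (Module.End k M.M)⟦X⟧} (hS : GrS M r S)
    {v : ℕ → M.M} (hv : ∀ n : ℕ, v n ∈ M.grM (i - 2 * n)) (e : i + r = i') (n : ℕ) :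
    Ph S v n ∈ M.grM (i' - 2 * n) := by
  rw [Ph_apply]
  refine sum_mem fun x hx => cast_gr (hS _ _ _ (hv _)) ?_
  rw [Finset.HasAntidiagonal.mem_antidiagonal] at hx
  rw [← hx, ← e]; push_cast; ring

lemma Ph_act {M : DGMod k A} {S : (Module.End k M.M)⟦X⟧} (hS : LinS M S)
    (v : ℕ → M.M) (a : A.A) :
    Ph S (fun n => M.act (v n) a) = fun n => M.act (Ph S v n) a := by
  funext n
  rw [Ph_apply, Ph_apply, act_sum]
  exact Finset.sum_congr rfl fun x _ => hS _ _ _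

structure Dat (M : DGMod k A) where
  W : (Module.End k M.M)⟦X⟧
  P : (Module.End k M.M)⟦X⟧
  W0 : coeff 0 W = 0
  Wg : GrS M 1 W
  Wl : LinS M W
  Pg : GrS M 0 P
  Pl : LinS M P
  F0 : FF (dL M) W P = 0
  G0 : GG (dL M) W P = 0

namespace Dat
variable {M : DGMod k A} (D : Dat M)

noncomputable def V : (Module.End k M.M)⟦X⟧ := C (dL M) + D.W

lemma coeff_V_zero : coeff 0 D.V = dL M := by
  rw [V, map_add, D.W0, PowerSeries.coeff_C, if_pos rfl, add_zero]
lemma coeff_V_succ (n : ℕ) : coeff (n + 1) D.V = coeff (n + 1) D.W := by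
  rw [V, map_add, PowerSeries.coeff_C, if_neg (Nat.succ_ne_zero n), zero_add]

lemma Vg : GrS M 1 D.V := by
  intro n i m hm
  cases n with
  | zero => rw [coeff_V_zero]; exact cast_gr (M.dM_gr i m hm) (by simp)
  | succ n => rw [coeff_V_succ]; exact D.Wg _ i m hm

lemma V_leib {i : ℤ} {v : ℕ → M.M} (hv : ∀ n : ℕ, v n ∈ M.grM (i - 2 * n)) (a : A.A) :
    Ph D.V (fun n => M.act (v n) a) = (fun n => M.act (Ph D.V v n) a) +
      (((-1 : ℤˣ) ^ i : ℤˣ) : ℤ) • (fun n => M.act (v n) (A.d a)) := by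
  funext n
  rw [V, map_add, LinearMap.add_apply, Ph_act D.Wl, LinearMap.add_apply]
  simp only [Pi.add_apply, Pi.smul_apply, Ph_C, M.act_addl]
  have h := M.leibnizM _ _ (hv n) a
  have e : ((-1 : ℤˣ) ^ (i - 2 * n)) = (-1 : ℤˣ) ^ i := by
    rw [zpow_sub, zpow_mul]; simp
  rw [e] at h
  show M.dM _ + _ = M.act (M.dM _) a + _ + _
  rw [h]; abel

lemma VV (v : ℕ → M.M) : Ph D.V (Ph D.V v) = Ph (k := k) X (Ph D.P (Ph D.P v)) - Ph (k := k) X (Ph D.P v) := by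
  have h := congrArg (fun S => Ph S v) D.F0
  simp only [FF, map_sub, map_mul, map_zero, LinearMap.sub_apply, Module.End.mul_apply, LinearMap.zero_apply, mul_sub] at h
  exact sub_eq_zero.mp h

lemma PV (v : ℕ → M.M) : Ph D.P (Ph D.V v) = Ph D.V (Ph D.P v) := by
  have h := congrArg (fun S => Ph S v) D.G0
  simp only [GG, map_sub, map_mul, map_zero, LinearMap.sub_apply, Module.End.mul_apply, LinearMap.zero_apply] at h
  exact sub_eq_zero.mp h

/-- the differential of the telescope -/
noncomputable def DD : ((ℕ → M.M) × (ℕ → M.M)) → ((ℕ → M.M) × (ℕ → M.M)) := fun x =>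
  (Ph D.V x.1 + Ph (k := k) X (Ph D.P x.2), x.1 - Ph D.P x.1 - Ph D.V x.2)

lemma Xg {i : ℤ} {v : ℕ → M.M} (hv : ∀ n : ℕ, v n ∈ M.grM (i - 2 * n)) {i' : ℤ} (e : i + 2 = i') (n : ℕ) :
    Ph (k := k) X v n ∈ M.grM (i' - 2 * n) := by
  cases n with
  | zero => rw [Ph_X_zero]; exact zero_mem _
  | succ n => rw [Ph_X_succ]; exact cast_gr (hv n) (by push_cast; omega)

lemma X_act (v : ℕ → M.M) (a : A.A) :
    Ph (k := k) X (fun n => M.act (v n) a) = fun n => M.act (Ph (k := k) X v n) a := by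
  funext n
  cases n with
  | zero => rw [Ph_X_zero, Ph_X_zero, zero_act]
  | succ n => rw [Ph_X_succ, Ph_X_succ]

noncomputable def Tel : DGMod k A where
  M := (ℕ → M.M) × (ℕ → M.M)
  grM i :=
    { carrier := {x | (∀ n : ℕ, x.1 n ∈ M.grM (i - 2 * n)) ∧ ∀ n : ℕ, x.2 n ∈ M.grM (i - 1 - 2 * n)}
      zero_mem' := ⟨fun _ => zero_mem _, fun _ => zero_mem _⟩
      add_mem' := fun ha hb => ⟨fun n => add_mem (ha.1 n) (hb.1 n), fun n => add_mem (ha.2 n) (hb.2 n)⟩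
      smul_mem' := fun c x hx => ⟨fun n => Submodule.smul_mem _ c (hx.1 n),
        fun n => Submodule.smul_mem _ c (hx.2 n)⟩ }
  act x a := (fun n => M.act (x.1 n) a, fun n => M.act (x.2 n) a)
  act_addl x y a := Prod.ext (funext fun _ => M.act_addl _ _ _) (funext fun _ => M.act_addl _ _ _)
  act_addr x a b := Prod.ext (funext fun _ => M.act_addr _ _ _) (funext fun _ => M.act_addr _ _ _)
  act_smul c x a := Prod.ext (funext fun _ => M.act_smul _ _ _) (funext fun _ => M.act_smul _ _ _)
  act_smul' c x a := Prod.ext (funext fun _ => M.act_smul' _ _ _) (funext fun _ => M.act_smul' _ _ _)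
  act_one x := Prod.ext (funext fun _ => M.act_one _) (funext fun _ => M.act_one _)
  act_mul x a b := Prod.ext (funext fun _ => M.act_mul _ _ _) (funext fun _ => M.act_mul _ _ _)
  act_gr i j x hx a ha := ⟨fun n => cast_gr (M.act_gr _ _ _ (hx.1 n) _ ha) (by ring),
    fun n => cast_gr (M.act_gr _ _ _ (hx.2 n) _ ha) (by ring)⟩
  dM := D.DD
  dM_add x y := by
    refine Prod.ext ?_ ?_
    · simp only [DD, Prod.fst_add, Prod.snd_add, map_add]; abel
    · simp only [DD, Prod.fst_add, Prod.snd_add, map_add]; abel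
  dM_smul c x := by
    refine Prod.ext ?_ ?_
    · simp only [DD, Prod.smul_fst, Prod.smul_snd, map_smul, smul_add]
    · simp only [DD, Prod.smul_fst, Prod.smul_snd, map_smul, smul_sub]
  dM_sq x := by
    refine Prod.ext ?_ ?_
    · simp only [DD, map_add, map_sub, VV, PV, Ph_comm, Prod.fst_zero]; abel
    · simp only [DD, map_add, map_sub, VV, PV, Ph_comm, Prod.snd_zero]; abel
  dM_gr i x hx := by
    refine ⟨fun n => add_mem (Ph_gr D.Vg hx.1 rfl n) (Xg (Ph_gr D.Pg hx.2 rfl) (by ring) n), fun n => ?_⟩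
    refine sub_mem (sub_mem (cast_gr (hx.1 n) (by ring)) (Ph_gr D.Pg hx.1 (by ring) n))
      (Ph_gr D.Vg hx.2 (by ring) n)
  leibnizM i x hx a := by
    have e : (((-1 : ℤˣ) ^ (i - 1) : ℤˣ) : ℤ) = - (((-1 : ℤˣ) ^ i : ℤˣ) : ℤ) := by
      rw [zpow_sub]; simp
    refine Prod.ext ?_ ?_
    · simp only [DD]
      rw [V_leib D hx.1, Ph_act D.Pl, X_act]
      funext n
      simp only [Prod.fst_add, Prod.smul_fst, Pi.add_apply, Pi.smul_apply, M.act_addl]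
      abel
    · simp only [DD]
      rw [V_leib D hx.2, Ph_act D.Pl, e]
      funext n
      simp only [Prod.snd_add, Prod.smul_snd, Pi.add_apply, Pi.smul_apply, Pi.sub_apply, sub_act, neg_smul, Pi.neg_apply]
      abel

noncomputable def telQC {n : ℕ} {dv : Fin n → ℤ} (Q : QC M (Fin n) dv) :
    QC D.Tel ((ℕ × Fin n) ⊕ (ℕ × Fin n))
      (Sum.elim (fun x => dv x.2 + 2 * x.1) (fun x => dv x.2 + 2 * x.1 + 1)) where
  p := AddMonoidHom.mk' (fun x => Sum.elim (fun y => Q.p (x.1 y.1) y.2) (fun y => Q.p (x.2 y.1) y.2)) (by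
    intro x y
    funext z
    rcases z with z | z
    · exact congrFun (Q.p.map_add (x.1 z.1) (y.1 z.1)) z.2
    · exact congrFun (Q.p.map_add (x.2 z.1) (y.2 z.1)) z.2)
  ι := AddMonoidHom.mk' (fun y => (fun n => Q.ι (fun l => y (Sum.inl (n, l))), fun n => Q.ι (fun l => y (Sum.inr (n, l))))) (by
    intro x y
    refine Prod.ext ?_ ?_
    · funext n; exact Q.ι.map_add (fun l => x (Sum.inl (n, l))) (fun l => y (Sum.inl (n, l)))
    · funext n; exact Q.ι.map_add (fun l => x (Sum.inr (n, l))) (fun l => y (Sum.inr (n, l))))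
  p_act x a j := by
    rcases j with j | j
    · exact Q.p_act _ a _
    · exact Q.p_act _ a _
  p_gr g x hx j := by
    rcases j with j | j
    · have h := Q.p_gr _ _ (hx.1 j.1) j.2
      rw [show g - 2 * (j.1 : ℤ) - dv j.2 = g - (dv j.2 + 2 * j.1) by ring] at h
      exact h
    · have h := Q.p_gr _ _ (hx.2 j.1) j.2
      rw [show g - 1 - 2 * (j.1 : ℤ) - dv j.2 = g - (dv j.2 + 2 * j.1 + 1) by ring] at h
      exact h
  ι_act v a := Prod.ext (funext fun n => Q.ι_act _ a) (funext fun n => Q.ι_act _ a)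
  ι_gr g v hv := by
    refine ⟨fun n => Q.ι_gr _ _ fun l => ?_, fun n => Q.ι_gr _ _ fun l => ?_⟩
    · have h := hv (Sum.inl (n, l))
      simp only [Sum.elim_inl] at h
      rw [show g - (dv l + 2 * (n : ℤ)) = g - 2 * n - dv l by ring] at h
      exact h
    · have h := hv (Sum.inr (n, l))
      simp only [Sum.elim_inr] at h
      rw [show g - (dv l + 2 * (n : ℤ) + 1) = g - 1 - 2 * n - dv l by ring] at h
      exact h
  ιp x := Prod.ext (funext fun n => Q.ιp (x.1 n)) (funext fun n => Q.ιp (x.2 n))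
  loc v j h := by
    rcases j with j | j
    · refine Q.loc _ _ fun l hl => h (Sum.inl (j.1, l)) ?_
      simp [hl]
    · refine Q.loc _ _ fun l hl => h (Sum.inr (j.1, l)) ?_
      simp [hl]
  fin c := by
    obtain ⟨a, ha⟩ := (Set.finite_range dv).bddBelow
    have hfin : ((Set.Iic (c - a).toNat) ×ˢ (Set.univ : Set (Fin n))).Finite :=
      (Set.finite_Iic _).prod Set.finite_univ
    refine ((hfin.image Sum.inl).union (hfin.image Sum.inr)).subset ?_
    rintro (⟨m, l⟩ | ⟨m, l⟩) h
    · left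
      have h1 : a ≤ dv l := ha ⟨l, rfl⟩
      simp only [Set.mem_ofPred_eq, Sum.elim_inl] at h
      exact ⟨(m, l), ⟨by simp only [Set.mem_Iic]; omega, trivial⟩, rfl⟩
    · right
      have h1 : a ≤ dv l := ha ⟨l, rfl⟩
      simp only [Set.mem_ofPred_eq, Sum.elim_inr] at h
      exact ⟨(m, l), ⟨by simp only [Set.mem_Iic]; omega, trivial⟩, rfl⟩

/-- the contraction -/
def ss (x : D.Tel.M) : D.Tel.M := (x.2, sg x.1)
noncomputable def inc (m : M.M) : D.Tel.M :=
  (Ph D.P (Pi.single 0 m), - sg (Ph D.V (Pi.single 0 m)))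
def pr (x : D.Tel.M) : M.M := x.1 0

lemma ss_graded : DGMod.IsGradedMap D.Tel D.Tel (-1) D.ss :=
  ⟨fun _ _ => rfl, fun _ _ => rfl, fun _ _ => rfl, fun i x hx =>
    ⟨fun n => cast_gr (hx.2 n) (by ring), fun n => cast_gr (hx.1 (n + 1)) (by push_cast; ring)⟩⟩

lemma key (x : D.Tel.M) : x - (D.Tel.dM (D.ss x) + D.ss (D.Tel.dM x)) = D.inc (D.pr x) := by
  obtain ⟨v, w⟩ := x
  have h1 := Ph_sg D.P v
  have h2 := Ph_sg D.V v
  refine Prod.ext ?_ ?_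
  · show v - ((Ph D.V w + Ph (k := k) X (Ph D.P (sg v))) + (v - Ph D.P v - Ph D.V w)) =
      Ph D.P (Pi.single 0 (v 0))
    rw [h1]; abel
  · show w - ((w - Ph D.P w - Ph D.V (sg v)) + sg (Ph D.V v + Ph (k := k) X (Ph D.P w))) =
      - sg (Ph D.V (Pi.single 0 (v 0)))
    rw [h2, sg_add, sg_add, sg_X, sg_X]; abel

lemma pr_dM (x : D.Tel.M) : D.pr (D.Tel.dM x) = M.dM (D.pr x) := by
  show Ph D.V x.1 0 + Ph (k := k) X (Ph D.P x.2) 0 = M.dM (x.1 0)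
  rw [Ph_X_zero, add_zero, Ph_zero, coeff_V_zero]; rfl

lemma pr_hom : DGMod.IsHom D.Tel M D.pr :=
  ⟨fun _ _ => rfl, fun _ _ => rfl, fun _ _ => rfl, fun i x hx => cast_gr (hx.1 0) (by simp),
    D.pr_dM⟩

lemma pr_inc (m : M.M) : D.pr (D.inc m) = coeff 0 D.P m := Ph_single D.P m 0

lemma inc_dM (m : M.M) : D.inc (M.dM m) = D.Tel.dM (D.inc m) := by
  let x : D.Tel.M := (Pi.single 0 m, 0)
  have hx : D.pr x = m := by
    show (Pi.single 0 m : ℕ → M.M) 0 = m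
    simp
  have h1 := D.key x
  have h2 := D.key (D.Tel.dM x)
  rw [pr_dM, hx] at h2
  rw [hx] at h1
  rw [← h1, ← h2, dM_sub, D.Tel.dM_add, D.Tel.dM_sq, D.Tel.dM_sq]
  have : D.ss 0 = 0 := rfl
  rw [this]; abel

lemma inc_hom : DGMod.IsHom M D.Tel D.inc := by
  refine ⟨fun m m' => ?_, fun c m => ?_, fun m a => ?_, fun i m hm => ?_, D.inc_dM⟩
  · refine Prod.ext (funext fun n => ?_) (funext fun n => ?_)
    · show Ph D.P _ n = Ph D.P _ n + Ph D.P _ n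
      simp only [Ph_single, map_add]
    · show -Ph D.V _ (n + 1) = -Ph D.V _ (n + 1) + -Ph D.V _ (n + 1)
      simp only [Ph_single, map_add]; abel
  · refine Prod.ext (funext fun n => ?_) (funext fun n => ?_)
    · show Ph D.P _ n = c • Ph D.P _ n
      simp only [Ph_single, map_smul]
    · show -Ph D.V _ (n + 1) = c • -Ph D.V _ (n + 1)
      simp only [Ph_single, map_smul, smul_neg]
  · refine Prod.ext (funext fun n => ?_) (funext fun n => ?_)
    · show Ph D.P _ n = M.act (Ph D.P _ n) a
      simp only [Ph_single]; exact D.Pl n m a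
    · show -Ph D.V _ (n + 1) = M.act (-Ph D.V _ (n + 1)) a
      simp only [Ph_single, coeff_V_succ, neg_act]
      rw [D.Wl]
  · refine ⟨fun n => ?_, fun n => ?_⟩
    · show Ph D.P _ n ∈ _
      rw [Ph_single]; exact cast_gr (D.Pg n i m hm) (by ring)
    · show -Ph D.V _ (n + 1) ∈ _
      rw [Ph_single]; exact neg_mem (cast_gr (D.Vg (n + 1) i m hm) (by push_cast; ring))
end Dat
end Tel
end CohSplit

namespace CohSplit
section Fin
open PowerSeries
variable {k : Type} [CommRing k] {A : DGA k}

lemma exists_QC (M : DGMod k A) (hM : DGMod.IsCohesive M) :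
    ∃ (n : ℕ) (dv : Fin n → ℤ), Nonempty (QC M (Fin n) dv) := by
  obtain ⟨n, dv, e, p, ι, _, he, _, p_add, p_act, p_gr, ι_add, ι_act, ι_gr, ιp, pι⟩ := hM
  refine ⟨n, dv, ⟨{ p := AddMonoidHom.mk' p (fun m m' => funext fun i => p_add m m' i)
                    ι := AddMonoidHom.mk' ι ι_add
                    p_act := p_act
                    p_gr := p_gr
                    ι_act := ι_act
                    ι_gr := ι_gr
                    ιp := ιp
                    loc := ?_
                    fin := fun c => Set.toFinite _ }⟩⟩
  intro v j h
  show p (ι v) j = 0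
  rw [pι]
  refine Finset.sum_eq_zero fun l _ => ?_
  by_cases hl : dv j = dv l
  · rw [h l hl.symm, mul_zero]
  · rw [he _ _ hl, zero_mul]

/-- linear graded endomorphisms of degree r -/
def DegM (M : DGMod k A) (r : ℤ) : AddSubgroup (Module.End k M.M) where
  carrier := {f | (∀ m a, f (M.act m a) = M.act (f m) a) ∧
    ∀ i, ∀ m ∈ M.grM i, f m ∈ M.grM (i + r)}
  zero_mem' := ⟨fun m a => (zero_act M a).symm, fun _ _ _ => zero_mem _⟩
  add_mem' := by
    intro f g hf hg
    refine ⟨fun m a => ?_, fun i m hm => add_mem (hf.2 i m hm) (hg.2 i m hm)⟩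
    rw [LinearMap.add_apply, LinearMap.add_apply, M.act_addl, hf.1, hg.1]
  neg_mem' := by
    intro f hf
    refine ⟨fun m a => ?_, fun i m hm => neg_mem (hf.2 i m hm)⟩
    rw [LinearMap.neg_apply, LinearMap.neg_apply, neg_act, hf.1]

lemma obs (M : DGMod k A) {n : ℕ} {dv : Fin n → ℤ} (Q : QC M (Fin n) dv) {b : ℤ}
    (hb : ∀ x, x ∈ Q.Filt b) (p h : Module.End k M.M) (hp : p ∈ DegM M 0) (hh : h ∈ DegM M (-1))
    (dp : dL M * p = p * dL M) (hq : dL M * h + h * dL M = p * p - p) :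
    Obs (DegM M) (dL M) p h where
  mul := by
    intro r s f g hf hg
    refine ⟨fun m a => ?_, fun i m hm => ?_⟩
    · rw [Module.End.mul_apply, Module.End.mul_apply, hg.1, hf.1]
    · exact cast_gr (hf.2 _ _ (hg.2 i m hm)) (by ring)
  even := by
    intro r f hr hf
    refine ⟨fun m a => ?_, fun i m hm => ?_⟩
    · refine Q.hom_ind (hb m) (fun m => (dL M * f - f * dL M) (M.act m a) =
        M.act ((dL M * f - f * dL M) m) a) ?_ ?_ ?_
      · simp only [zero_act, map_zero]
      · intro x y hx hy
        rw [M.act_addl, map_add, map_add, hx, hy, M.act_addl]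
      · intro i m hm
        have h1 := M.leibnizM _ _ (hf.2 i m hm) a
        have h2 := M.leibnizM _ _ hm a
        have e : ((-1 : ℤˣ) ^ (i + r)) = (-1 : ℤˣ) ^ i := by
          rw [zpow_add, hr.neg_one_zpow, mul_one]
        rw [e] at h1
        show M.dM (f (M.act m a)) - f (M.dM (M.act m a)) = M.act (M.dM (f m) - f (M.dM m)) a
        rw [hf.1, h1, h2, map_add, map_zsmul, hf.1, hf.1, sub_act]; abel
    · refine sub_mem (cast_gr (M.dM_gr _ _ (hf.2 i m hm)) (by ring))
        (cast_gr (hf.2 _ _ (M.dM_gr i m hm)) (by ring))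
  odd := by
    intro r f hr hf
    refine ⟨fun m a => ?_, fun i m hm => ?_⟩
    · refine Q.hom_ind (hb m) (fun m => (dL M * f + f * dL M) (M.act m a) =
        M.act ((dL M * f + f * dL M) m) a) ?_ ?_ ?_
      · simp only [zero_act, map_zero]
      · intro x y hx hy
        rw [M.act_addl, map_add, map_add, hx, hy, M.act_addl]
      · intro i m hm
        have h1 := M.leibnizM _ _ (hf.2 i m hm) a
        have h2 := M.leibnizM _ _ hm a
        have e : (((-1 : ℤˣ) ^ (i + r) : ℤˣ) : ℤ) = - (((-1 : ℤˣ) ^ i : ℤˣ) : ℤ) := by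
          rw [zpow_add, hr.neg_one_zpow]; simp
        rw [e] at h1
        show M.dM (f (M.act m a)) + f (M.dM (M.act m a)) = M.act (M.dM (f m) + f (M.dM m)) a
        rw [hf.1, h1, h2, map_add, map_zsmul, hf.1, hf.1, M.act_addl, neg_smul]; abel
    · refine add_mem (cast_gr (M.dM_gr _ _ (hf.2 i m hm)) (by ring))
        (cast_gr (hf.2 _ _ (M.dM_gr i m hm)) (by ring))
  dd := by ext m; exact M.dM_sq m
  dp := dp
  hp := hp
  hh := hh
  hq := hq

lemma graded_of_hom {M N : DGMod k A} {f : M.M → N.M} (hf : DGMod.IsHom M N f) :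
    DGMod.IsGradedMap M N 0 f :=
  ⟨hf.1, hf.2.1, hf.2.2.1, fun i m hm => cast_gr (hf.2.2.2.1 i m hm) (by ring)⟩

theorem main (A : DGA k)
    (hnneg : ∀ i : ℤ, i < 0 → A.gr i = ⊥)
    (M : DGMod k A) (hM : DGMod.IsCohesive M)
    (e : M.M → M.M) (he : DGMod.IsHom M M e)
    (hidem : DGMod.Homotopic M M (fun m => e (e m)) e) :
    ∃ N : DGMod k A, DGMod.IsCohesive N ∧
      ∃ (p : M.M → N.M) (j : N.M → M.M),
        DGMod.IsHom M N p ∧ DGMod.IsHom N M j ∧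
        DGMod.Homotopic N N (fun x => p (j x)) (fun x => x) ∧
        DGMod.Homotopic M M (fun m => j (p m)) e := by
  obtain ⟨n, dv, ⟨Q⟩⟩ := exists_QC M hM
  obtain ⟨a, ha⟩ := (Set.finite_range dv).bddBelow
  obtain ⟨b, hb⟩ := (Set.finite_range dv).bddAbove
  have ha : ∀ l, a ≤ dv l := fun l => ha ⟨l, rfl⟩
  have hb : ∀ l, dv l ≤ b := fun l => hb ⟨l, rfl⟩
  have hFb : ∀ x, x ∈ Q.Filt b := fun x l hl => absurd (hb l) (by omega)
  have hFa : ∀ c < a, ∀ x ∈ Q.Filt c, x = 0 := by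
    intro c hc x hx
    rw [← Q.ιp x]
    have : Q.p x = 0 := funext fun l => hx l (by have := ha l; omega)
    rw [this, map_zero]
  obtain ⟨h, hh, hhe⟩ := hidem
  let pL : Module.End k M.M := { toFun := e, map_add' := he.1, map_smul' := he.2.1 }
  let hL : Module.End k M.M := { toFun := h, map_add' := hh.1, map_smul' := hh.2.1 }
  have hp : pL ∈ DegM M 0 := (graded_of_hom he).2.2
  have hhD : hL ∈ DegM M (-1) := hh.2.2
  have H : Obs (DegM M) (dL M) pL hL := obs M Q hFb pL hL hp hhD
    (by ext m; exact (he.2.2.2.2 m).symm) (by ext m; exact (hhe m).symm)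
  obtain ⟨W, P, hSt, F0, G0⟩ := exists_coherent H (b - a).toNat (by
    intro r hr f hf
    ext m
    have hf' : DGMod.IsGradedMap M M r f := ⟨map_add f, map_smul f, hf.1, hf.2⟩
    exact hFa (b + r) (by omega) _ (Q.map_mem hnneg Q hf' (hFb m) rfl))
  let D : Dat M :=
    { W := W
      P := P
      W0 := hSt.W0
      Wg := fun n i m hm => cast_gr ((hSt.WD n).2 i m hm) (by ring)
      Wl := fun n => (hSt.WD n).1
      Pg := fun n i m hm => cast_gr ((hSt.PD n).2 i m hm) (by ring)
      Pl := fun n => (hSt.PD n).1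
      F0 := F0
      G0 := G0 }
  let QT := D.telQC Q
  have hinc : ∀ m, D.inc m ∈ QT.Filt b := fun m =>
    Q.map_mem hnneg QT (graded_of_hom D.inc_hom) (hFb m) (by ring)
  have hinc' : ∀ m, D.inc m ∈ QT.truncSub (b + 1) := fun m =>
    ⟨QT.mono (by omega) (hinc m), by
      rw [← D.inc_dM]; exact QT.mono (by omega) (hinc _)⟩
  have hs : ∀ x ∈ QT.truncSub (b + 1), D.ss x ∈ QT.truncSub (b + 1) := by
    intro x hx
    have h1 : D.ss x ∈ QT.Filt b := QT.map_mem hnneg QT D.ss_graded hx.1 (by ring)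
    exact ⟨QT.mono (by omega) h1, QT.d_mem hnneg h1 rfl⟩
  have hpi := D.pr_hom
  have hii := D.inc_hom
  have hsg := D.ss_graded
  refine ⟨QT.trunc hnneg (b + 1), QT.trunc_cohesive hnneg (b + 1) D.ss D.ss_graded ?_,
    fun m => ⟨D.inc m, hinc' m⟩, fun x => D.pr x.1, ?_, ?_, ?_, ?_⟩
  · intro x
    rw [D.key, add_sub_cancel_right]; exact hinc _
  · exact ⟨fun m m' => Subtype.ext (hii.1 m m'), fun c m => Subtype.ext (hii.2.1 c m),
      fun m a => Subtype.ext (hii.2.2.1 m a), fun i m hm => hii.2.2.2.1 i m hm,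
      fun m => Subtype.ext (hii.2.2.2.2 m)⟩
  · exact ⟨fun m m' => hpi.1 m.1 m'.1, fun c m => hpi.2.1 c m.1,
      fun m a => hpi.2.2.1 m.1 a, fun i m hm => hpi.2.2.2.1 i m.1 hm,
      fun m => hpi.2.2.2.2 m.1⟩
  · refine ⟨fun x => -⟨D.ss x.1, hs x.1 x.2⟩, ⟨fun m m' => Subtype.ext ?_, fun c m => Subtype.ext ?_,
      fun m a => Subtype.ext ?_, fun i m hm => ?_⟩, fun x => Subtype.ext ?_⟩
    · show -D.ss (m.1 + m'.1) = -D.ss m.1 + -D.ss m'.1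
      rw [hsg.1, neg_add]
    · show -D.ss (c • m.1) = c • -D.ss m.1
      rw [hsg.2.1, smul_neg]
    · show -D.ss (D.Tel.act m.1 a) = D.Tel.act (-D.ss m.1) a
      rw [hsg.2.2.1, neg_act]
    · exact neg_mem (hsg.2.2.2 i m.1 hm)
    · show D.inc (D.pr x.1) - x.1 = D.Tel.dM (-D.ss x.1) + -D.ss (D.Tel.dM x.1)
      rw [← D.key, show D.Tel.dM (-D.ss x.1) = - D.Tel.dM (D.ss x.1) from (dL D.Tel).map_neg _]
      abel
  · refine ⟨fun _ => 0, ⟨fun _ _ => (add_zero 0).symm, fun c _ => (smul_zero c).symm,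
      fun _ a => (zero_act M a).symm, fun _ _ _ => zero_mem _⟩, fun m => ?_⟩
    show D.pr (D.inc m) - e m = M.dM 0 + 0
    rw [D.pr_inc, dM_zero, add_zero, sub_eq_zero]
    exact congrArg (fun f => f m) hSt.P0
end Fin
end CohSplit

/-- **Theorem.** Let `A` be a dg algebra concentrated in non-negative degrees that is
flat as a module over its degree-zero part `A⁰`.  Then every idempotent morphism in the
homotopy category of cohesive `A`-modules splits. -/
theorem idempotents_split_in_homotopy_category_of_cohesive_modules
    {k : Type} [CommRing k] (A : DGA k)
    (hnneg : ∀ i : ℤ, i < 0 → A.gr i = ⊥)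
    (hflat : RightFlatOverDegreeZero A)
    (M : DGMod k A) (hM : DGMod.IsCohesive M)
    (e : M.M → M.M) (he : DGMod.IsHom M M e)
    (hidem : DGMod.Homotopic M M (fun m => e (e m)) e) :
    ∃ N : DGMod k A, DGMod.IsCohesive N ∧
      ∃ (p : M.M → N.M) (j : N.M → M.M),
        DGMod.IsHom M N p ∧ DGMod.IsHom N M j ∧
        DGMod.Homotopic N N (fun x => p (j x)) (fun x => x) ∧
        DGMod.Homotopic M M (fun m => j (p m)) e := by
  exact CohSplit.main A hnneg M hM e he hidem
end
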